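/- arXiv:0903.4601 — 3 statements merged into one kernel-verified Lean document; each statement's English description precedes it below -/
import Mathlib

section
/- Let w be a word of length n in the letters u_1^{±1}, ..., u_N^{±1} whose cyclic reduction has positive length. Then there is a unique non-crossing half-pairing on [n] which is w-admissible. -/
/-!
Read the bi-infinite periodic word `lift w` from left to right, keeping a stack: a letter
cancels against the top of the stack if it is its inverse, and is pushed otherwise (`stk`).
The stack after `j` letters spells the reduced form of the prefix of length `j`. Since the
cyclic reduction of `w` is not empty, the powers of `w` have unbounded reduced length, so the
height of the stack tends to infinity (`stk_tendsto`). Two runs of the stack from different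
initial stacks differ only by bounded bottom parts (`stk_coalesce`); comparing the runs started
at `0` and at `n` shows that the height eventually gains a fixed `m > 0` over each period
(`stk_drift`), so it extends to a path `H` on `ℤ` with `H (k + n) = H k + m` (`exists_height`).

Existence. Each down-step of `H` is joined by an arc to the last earlier up-step at the same
level, and the up-steps without an arc are those after which the path never returns to its
height. Arcs are nested or disjoint and shorter than `n`, so modulo `n` they form a
non-crossing half-pairing whose through strings are the unmatched up-steps (`hPairing`). Ends
of an arc are a push and the pop that removes it, hence inverse letters (`Height.arc_inv`). If
`a` covers `b`, the letter of `a` is on top of the stack when that of `b` is pushed, so they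
do not cancel (`Height.cover_ne`). Each through string covers the next one cyclically, so the
through word is cyclically reduced, and the factors between them are trivial in the free
group, so that `w` reduces cyclically to it (`Height.through`).

Uniqueness. Let `π` be admissible and start the stack at a through string. By induction the
stack consists of the letters of the outward oriented positions whose partner has not been
read (`OpenStack`): the covering condition forces a push at each outward position, and the
pairing condition a pop at each inward one. The run started at `0` coalesces with this one, so
the outward positions of `π` are, far enough to the right, the pushes of a run that depends on
`w` only (`up_eventually`). By periodicity all orientations are determined, and these
determine the pairs (`eq_of_up`).
-/

namespace NCC

/-- A letter `u_i^{±1}`: a generator index together with a sign. -/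
abbrev Letter (N : ℕ) := Fin N × Bool

/-- The inverse of a letter. -/
def linv {N : ℕ} (l : Letter N) : Letter N := (l.1, !l.2)

/-- One cyclic reduction step: either a linear reduction step (removal of two
adjacent letters which are inverses of each other), or removal of the first and
last letters when they are inverses of each other. -/
def CyclicStep {N : ℕ} (w w' : List (Letter N)) : Prop :=
  FreeGroup.Red.Step w w' ∨
    ∃ (l : Letter N) (m : List (Letter N)), w = l :: (m ++ [linv l]) ∧ w' = m

/-- `w` reduces cyclically (in zero or more steps) to `v`. -/
def CycReducesTo {N : ℕ} (w v : List (Letter N)) : Prop :=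
  Relation.ReflTransGen CyclicStep w v

/-- A word is linearly reduced when no two adjacent letters are inverses of
each other. -/
def LinReduced {N : ℕ} (w : List (Letter N)) : Prop :=
  List.Chain' (fun a b => b ≠ linv a) w

/-- A word is cyclically reduced iff `w ++ w` is linearly reduced, i.e. it is
linearly reduced and its last letter is not the inverse of its first letter. -/
def CycReduced {N : ℕ} (w : List (Letter N)) : Prop :=
  LinReduced (w ++ w)

/-- A word is reducible to 1 if it linearly reduces to the empty word. -/
def ReducibleToOne {N : ℕ} (w : List (Letter N)) : Prop :=
  FreeGroup.Red w []

/-- A word has good reduction: no nonempty prefix is reducible to 1, and its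
linear reduction is cyclically reduced. -/
def GoodReduction {N : ℕ} (w : List (Letter N)) : Prop :=
  (∀ s, s <+: w → s ≠ [] → ¬ ReducibleToOne s) ∧
    CycReduced (FreeGroup.reduce w)

/-- The first `i` letters of the infinite word `w_∞ = w w w ⋯`. -/
def infTake {N : ℕ} (w : List (Letter N)) (i : ℕ) : List (Letter N) :=
  ((List.replicate i w).flatten).take i

open scoped Classical

/-- `i` and `j` lie in a common block of the partition `P`. -/
def Rel {n : ℕ} (P : Finpartition (Finset.univ : Finset (Fin n))) (i j : Fin n) : Prop :=
  ∃ B ∈ P.parts, i ∈ B ∧ j ∈ B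

/-- `i` lies in a singleton block of `P`. -/
def IsSingleton {n : ℕ} (P : Finpartition (Finset.univ : Finset (Fin n))) (i : Fin n) : Prop :=
  ∃ B ∈ P.parts, i ∈ B ∧ B.card = 1

/-- The relation of the partition `π̃` obtained from `P` by merging all
singleton blocks into a single block. -/
def RelTilde {n : ℕ} (P : Finpartition (Finset.univ : Finset (Fin n))) (i j : Fin n) : Prop :=
  Rel P i j ∨ (IsSingleton P i ∧ IsSingleton P j)

/-- An equivalence-like relation on `[n]` is non-crossing when there are no
`i₁ < i₂ < i₃ < i₄` with `i₁ ∼ i₃`, `i₂ ∼ i₄` but `i₁ ≁ i₂`. -/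
def NonCrossingRel {n : ℕ} (r : Fin n → Fin n → Prop) : Prop :=
  ∀ i1 i2 i3 i4 : Fin n, i1 < i2 → i2 < i3 → i3 < i4 → r i1 i3 → r i2 i4 → r i1 i2

/-- A non-crossing half-pairing on `[n]`: a non-crossing partition all of whose
blocks have at most two elements, with at least one singleton block (through
string), such that merging all singleton blocks still gives a non-crossing
partition. -/
structure HalfPairing (n : ℕ) where
  P : Finpartition (Finset.univ : Finset (Fin n))
  card_le : ∀ B ∈ P.parts, B.card ≤ 2
  exists_singleton : ∃ i, IsSingleton P i
  nc : NonCrossingRel (Rel P)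
  nc_tilde : NonCrossingRel (RelTilde P)

/-- `r` and `s` form a pair (a two-element block) of `π`. -/
def Pairs {n : ℕ} (π : HalfPairing n) (r s : Fin n) : Prop :=
  r ≠ s ∧ Rel π.P r s

/-- Membership in the cyclic interval `[i, j]` (going clockwise from `i` to
`j`, endpoints included). -/
def InCyc {n : ℕ} (i j x : Fin n) : Prop :=
  (x.val + n - i.val) % n ≤ (j.val + n - i.val) % n

/-- Cyclic successor of `i` in `[n]`. -/
def cnext {n : ℕ} (i : Fin n) : Fin n :=
  ⟨(i.val + 1) % n, Nat.mod_lt _ i.pos⟩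

/-- Cyclic predecessor of `i` in `[n]`. -/
def cprev {n : ℕ} (i : Fin n) : Fin n :=
  ⟨(i.val + n - 1) % n, Nat.mod_lt _ i.pos⟩

/-- `a + j` modulo `n`. -/
def cadd {n : ℕ} (a j : Fin n) : Fin n :=
  ⟨(a.val + j.val) % n, Nat.mod_lt _ a.pos⟩

/-- `x - a` modulo `n`. -/
def csub {n : ℕ} (x a : Fin n) : Fin n :=
  ⟨(x.val + n - a.val) % n, Nat.mod_lt _ a.pos⟩

/-- `i` has the outward orientation: it is a singleton, or it is the point of a
pair `(i, s)` such that the cyclic interval `[i, s]` contains no singleton. -/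
def OutOriented {n : ℕ} (π : HalfPairing n) (i : Fin n) : Prop :=
  IsSingleton π.P i ∨
    ∃ s, Pairs π i s ∧ ∀ x, InCyc i s x → ¬ IsSingleton π.P x

/-- `i` covers `j`: both are outward oriented, and either `j` is the cyclic
successor of `i`, or `π` pairs each point of the cyclic interval
`[i+1, j-1]` with another point of `[i+1, j-1]`. -/
def Covers {n : ℕ} (π : HalfPairing n) (i j : Fin n) : Prop :=
  OutOriented π i ∧ OutOriented π j ∧
    (j = cnext i ∨
      ∀ x, InCyc (cnext i) (cprev j) x →
        ∃ y, y ≠ x ∧ InCyc (cnext i) (cprev j) y ∧ Pairs π x y)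

/-- The set of through strings (singleton blocks) of `π`. -/
noncomputable def throughFinset {n : ℕ} (π : HalfPairing n) : Finset (Fin n) :=
  Finset.univ.filter (fun i => IsSingleton π.P i)

/-- The word formed by the letters of `w` at the through strings of `π`,
read in increasing order of position. -/
noncomputable def throughWord {n N : ℕ} (w : Fin n → Letter N) (π : HalfPairing n) :
    List (Letter N) :=
  ((throughFinset π).sort (· ≤ ·)).map w

/-- `π` is a `w`-pairing: paired positions carry mutually inverse letters, and
the through-string letters, read in order, form a cyclic reduction of `w`. -/
def IsWPairing {n N : ℕ} (w : Fin n → Letter N) (π : HalfPairing n) : Prop :=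
  (∀ r s, Pairs π r s → w r = linv (w s)) ∧
    CycReducesTo (List.ofFn w) (throughWord w π) ∧ CycReduced (throughWord w π)

/-- `π` is `w`-admissible: it is a `w`-pairing and `l_i ≠ l_j⁻¹` whenever
`i` covers `j`. -/
def Admissible {n N : ℕ} (w : Fin n → Letter N) (π : HalfPairing n) : Prop :=
  IsWPairing w π ∧ ∀ i j, Covers π i j → w i ≠ linv (w j)

/-! ### The cancelling stack -/

/-- One move of the left-to-right cancellation: the letter `a` cancels against the
top (the head) of the stack if that is `a⁻¹`, and is put on top otherwise. -/
def step {N : ℕ} (s : List (Letter N)) (a : Letter N) : List (Letter N) :=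
  match s with
  | [] => [a]
  | b :: t => if b = linv a then t else a :: b :: t

/-- The stack obtained from the stack `X` by reading the `k` letters
`W c, …, W (c + k - 1)` of the bi-infinite word `W`. -/
def stk {N : ℕ} (W : ℤ → Letter N) (c : ℤ) (X : List (Letter N)) : ℕ → List (Letter N)
  | 0 => X
  | k + 1 => step (stk W c X k) (W (c + k))

theorem stk_succ {N : ℕ} (W : ℤ → Letter N) (c : ℤ) (X : List (Letter N)) (k : ℕ) :
    stk W c X (k + 1) = step (stk W c X k) (W (c + k)) := rfl

theorem linv_linv {N : ℕ} (a : Letter N) : linv (linv a) = a := by simp [linv]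

theorem linv_ne {N : ℕ} (a : Letter N) : a ≠ linv a := by
  intro h
  have := congrArg Prod.snd h
  simp [linv] at this

theorem step_length {N : ℕ} (s : List (Letter N)) (a : Letter N) :
    (step s a).length = s.length + 1 ∨ (step s a).length + 1 = s.length := by
  cases s with
  | nil => simp [step]
  | cons b t => by_cases h : b = linv a <;> simp [step, h]

theorem step_push {N : ℕ} (s : List (Letter N)) (a : Letter N)
    (h : (step s a).length = s.length + 1) : step s a = a :: s := by
  cases s with
  | nil => simp [step]
  | cons b t =>
    by_cases hb : b = linv a
    · simp [step, hb] at h; omega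
    · simp [step, hb]

theorem step_pop {N : ℕ} (s : List (Letter N)) (a : Letter N)
    (h : (step s a).length + 1 = s.length) : s = linv a :: step s a := by
  cases s with
  | nil => simp [step] at h
  | cons b t =>
    by_cases hb : b = linv a
    · simp [step, hb]
    · simp [step, hb] at h; omega

theorem stk_length_le {N : ℕ} (W : ℤ → Letter N) (c : ℤ) (X : List (Letter N)) (k : ℕ) :
    (stk W c X k).length ≤ X.length + k := by
  induction k with
  | zero => simp [stk]
  | succ k ih =>
    have := step_length (stk W c X k) (W (c + k))
    simp only [stk]; omega

theorem stk_add {N : ℕ} (W : ℤ → Letter N) (c : ℕ) (X : List (Letter N)) (k : ℕ) :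
    stk W 0 X (c + k) = stk W c (stk W 0 X c) k := by
  induction k with
  | zero => simp [stk]
  | succ k ih => rw [← add_assoc]; simp only [stk, ih]; simp

theorem stk_shift {N : ℕ} (W : ℤ → Letter N) (n : ℤ) (hW : ∀ k, W (k + n) = W k)
    (c : ℤ) (X : List (Letter N)) (k : ℕ) : stk W (c + n) X k = stk W c X k := by
  induction k with
  | zero => simp [stk]
  | succ k ih =>
    simp only [stk, ih]
    rw [show c + n + (k : ℤ) = c + k + n by ring, hW]

/-- Two runs over the same letters, from different initial stacks, agree except for
bottom parts whose total size never grows. -/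
theorem stk_coalesce {N : ℕ} (W : ℤ → Letter N) (c : ℤ) (X : List (Letter N)) (k : ℕ) :
    ∃ u x y, stk W c X k = u ++ x ∧ stk W c [] k = u ++ y ∧
      x.length + y.length ≤ X.length := by
  induction k with
  | zero => exact ⟨[], X, [], by simp [stk]⟩
  | succ k ih =>
    obtain ⟨u, x, y, h1, h2, h3⟩ := ih
    simp only [stk, h1, h2]
    generalize W (c + k) = a
    cases u with
    | cons b t =>
      by_cases hb : b = linv a
      · exact ⟨t, x, y, by simp [step, hb], by simp [step, hb], h3⟩
      · exact ⟨a :: b :: t, x, y, by simp [step, hb], by simp [step, hb], h3⟩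
    | nil =>
      simp only [List.nil_append]
      rcases step_length x a with hx | hx <;> rcases step_length y a with hy | hy
      · exact ⟨[a], x, y, by simp [step_push x a hx], by simp [step_push y a hy], h3⟩
      · exact ⟨[], step x a, step y a, by simp, by simp, by omega⟩
      · exact ⟨[], step x a, step y a, by simp, by simp, by omega⟩
      · exact ⟨[], step x a, step y a, by simp, by simp, by omega⟩

theorem step_append {N : ℕ} (u x y : List (Letter N)) (hu : u ≠ []) (a : Letter N) :
    ∃ u', step (u ++ x) a = u' ++ x ∧ step (u ++ y) a = u' ++ y := by
  cases u with
  | nil => exact absurd rfl hu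
  | cons b t =>
    by_cases hb : b = linv a
    · exact ⟨t, by simp [step, hb], by simp [step, hb]⟩
    · exact ⟨a :: b :: t, by simp [step, hb], by simp [step, hb]⟩

/-- As long as the stack does not get lower than its initial height, the initial stack
stays at the bottom. -/
theorem stk_base {N : ℕ} (W : ℤ → Letter N) (c : ℤ) (X : List (Letter N)) (k : ℕ)
    (h : ∀ e ≤ k, X.length ≤ (stk W c X e).length) : ∃ u, stk W c X k = u ++ X := by
  induction k with
  | zero => exact ⟨[], by simp [stk]⟩
  | succ k ih =>
    obtain ⟨u, hu⟩ := ih (fun e he => h e (by omega))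
    have h1 := h (k + 1) le_rfl
    simp only [stk, hu] at h1 ⊢
    cases u with
    | nil =>
      simp only [List.nil_append] at *
      rcases step_length X (W (c + k)) with hx | hx
      · exact ⟨[W (c + k)], by simp [step_push _ _ hx]⟩
      · omega
    | cons b t =>
      obtain ⟨u', h2, -⟩ := step_append (b :: t) X X (by simp) (W (c + k))
      exact ⟨u', h2⟩

/-! ### The stack and the free group -/

/-- The factor `W a ⋯ W (a + k - 1)` of the bi-infinite word `W`. -/
def seg {N : ℕ} (W : ℤ → Letter N) (a : ℤ) (k : ℕ) : List (Letter N) :=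
  (List.range k).map (fun i : ℕ => W (a + i))

theorem seg_succ {N : ℕ} (W : ℤ → Letter N) (a : ℤ) (k : ℕ) :
    seg W a (k + 1) = seg W a k ++ [W (a + k)] := by
  simp [seg, List.range_succ]

theorem seg_add {N : ℕ} (W : ℤ → Letter N) (a : ℤ) (k l : ℕ) :
    seg W a (k + l) = seg W a k ++ seg W (a + k) l := by
  induction l with
  | zero => simp [seg]
  | succ l ih => rw [← add_assoc, seg_succ, ih, seg_succ]; simp [add_assoc]

theorem seg_shift {N : ℕ} (W : ℤ → Letter N) (n : ℤ) (hW : ∀ k, W (k + n) = W k)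
    (a : ℤ) (k : ℕ) : seg W (a + n) k = seg W a k := by
  unfold seg
  refine List.map_congr_left fun i _ => ?_
  rw [show a + n + (i : ℤ) = a + i + n by ring, hW]

theorem mk_linv {N : ℕ} (a : Letter N) :
    FreeGroup.mk [linv a] = (FreeGroup.mk [a])⁻¹ := by
  rw [FreeGroup.inv_mk]; rfl

theorem mk_step {N : ℕ} (s : List (Letter N)) (a : Letter N) :
    FreeGroup.mk (step s a).reverse = FreeGroup.mk s.reverse * FreeGroup.mk [a] := by
  rcases step_length s a with h | h
  · rw [step_push s a h]; simp [FreeGroup.mul_mk]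
  · conv_rhs => rw [step_pop s a h]
    rw [List.reverse_cons, ← FreeGroup.mul_mk, mk_linv, inv_mul_cancel_right]

theorem mk_stk {N : ℕ} (W : ℤ → Letter N) (c : ℤ) (k : ℕ) :
    FreeGroup.mk (stk W c [] k).reverse = FreeGroup.mk (seg W c k) := by
  induction k with
  | zero => simp [stk, seg]
  | succ k ih => rw [seg_succ, ← FreeGroup.mul_mk, ← ih]; exact mk_step _ _

theorem red_iff {N : ℕ} (a b : Letter N) : (a.1 = b.1 → a.2 = b.2) ↔ b ≠ linv a := by
  rcases a with ⟨i, x⟩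
  rcases b with ⟨j, y⟩
  simp only [linv, ne_eq, Prod.mk.injEq, not_and]
  cases x <;> cases y <;> simp [eq_comm]

theorem linReduced_iff {N : ℕ} (L : List (Letter N)) :
    LinReduced L ↔ FreeGroup.IsReduced L := by
  unfold LinReduced FreeGroup.IsReduced
  simp only [red_iff]
  exact Iff.rfl

theorem stk_reduced {N : ℕ} (W : ℤ → Letter N) (c : ℤ) (k : ℕ) :
    FreeGroup.IsReduced (stk W c [] k) := by
  induction k with
  | zero => simp [stk]
  | succ k ih =>
    simp only [stk]
    generalize W (c + k) = a
    generalize stk W c [] k = s at *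
    cases s with
    | nil => simp [step]
    | cons b t =>
      by_cases hb : b = linv a
      · simp only [step, hb, if_true]
        exact ih.infix (List.infix_cons (List.infix_refl t))
      · simp only [step, hb, if_false]
        exact FreeGroup.isReduced_cons_cons.2 ⟨(red_iff _ _).2 hb, ih⟩

theorem stk_norm {N : ℕ} (W : ℤ → Letter N) (c : ℤ) (k : ℕ) :
    (stk W c [] k).length = (FreeGroup.mk (seg W c k)).norm := by
  rw [← mk_stk, FreeGroup.norm, FreeGroup.toWord_mk, FreeGroup.IsReduced.reduce_eq]
  · simp
  · unfold FreeGroup.IsReduced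
    rw [List.isChain_reverse]
    exact (stk_reduced W c k).imp fun a b h h' => (h h'.symm).symm

theorem cycReduced_iff {N : ℕ} {L : List (Letter N)} (h : CycReduced L) :
    FreeGroup.IsCyclicallyReduced L := by
  unfold CycReduced at h
  rw [linReduced_iff, FreeGroup.IsReduced, List.isChain_append] at h
  exact ⟨h.1, h.2.2⟩

theorem cycReducesTo_conj {N : ℕ} {w v : List (Letter N)} (h : CycReducesTo w v) :
    ∃ p : FreeGroup (Fin N), FreeGroup.mk w = p * FreeGroup.mk v * p⁻¹ := by
  induction h with
  | refl => exact ⟨1, by simp⟩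
  | tail _ h ih =>
    obtain ⟨p, hp⟩ := ih
    rcases h with h | ⟨l, m, h1, h2⟩
    · exact ⟨p, by rw [hp]; congr 2; exact Quot.sound h⟩
    · refine ⟨p * FreeGroup.mk [l], ?_⟩
      rw [hp, h2, h1, show l :: (m ++ [linv l]) = [l] ++ m ++ [linv l] by simp, ← FreeGroup.mul_mk,
        ← FreeGroup.mul_mk, mk_linv]
      group

theorem norm_pow_ge {N : ℕ} {v : List (Letter N)} (hv : CycReduced v) (k : ℕ) :
    ((FreeGroup.mk v) ^ k).norm = k * v.length := by
  rw [FreeGroup.pow_mk, FreeGroup.norm, FreeGroup.toWord_mk, FreeGroup.IsReduced.reduce_eq]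
  · simp
  · exact ((cycReduced_iff hv).flatten_replicate k).isReduced

theorem mk_seg_mul {N : ℕ} (W : ℤ → Letter N) (n : ℕ) (hW : ∀ k, W (k + n) = W k) (k : ℕ) :
    FreeGroup.mk (seg W 0 (k * n)) = (FreeGroup.mk (seg W 0 n)) ^ k := by
  induction k with
  | zero => simp [seg, FreeGroup.one_eq_mk]
  | succ k ih =>
    rw [show (k + 1) * n = n + k * n by ring, seg_add, ← FreeGroup.mul_mk, seg_shift W n hW, ih]
    exact (pow_succ' _ k).symm

/-- The powers of a word with non-trivial cyclic reduction have unbounded reduced length,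
so the stack height tends to infinity. -/
theorem stk_tendsto {N : ℕ} (W : ℤ → Letter N) (n : ℕ) (hn : 0 < n)
    (hW : ∀ k, W (k + n) = W k) (v : List (Letter N)) (hv : CycReducesTo (seg W 0 n) v)
    (hvc : CycReduced v) (hvpos : 0 < v.length) (B : ℕ) :
    ∃ J, ∀ j ≥ J, B < (stk W 0 [] j).length := by
  obtain ⟨p, hp⟩ := cycReducesTo_conj hv
  have key : ∀ k, k ≤ (stk W 0 [] (k * n)).length + 2 * p.norm := by
    intro k
    have h1 : (FreeGroup.mk v) ^ k = p⁻¹ * FreeGroup.mk (seg W 0 (k * n)) * p := by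
      rw [mk_seg_mul W n hW, hp, conj_pow]; group
    have h2 := norm_pow_ge hvc k
    rw [h1] at h2
    have h3 := FreeGroup.norm_mul_le (p⁻¹ * FreeGroup.mk (seg W 0 (k * n))) p
    have h4 := FreeGroup.norm_mul_le (p⁻¹) (FreeGroup.mk (seg W 0 (k * n)))
    rw [FreeGroup.norm_inv_eq] at h4
    rw [stk_norm]
    have : k ≤ k * v.length := Nat.le_mul_of_pos_right k hvpos
    omega
  have low : ∀ j l, (stk W 0 [] j).length ≤ (stk W 0 [] (j + l)).length + l := by
    intro j l
    induction l with
    | zero => simp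
    | succ l ih =>
      have := step_length (stk W 0 [] (j + l)) (W (0 + (j + l : ℕ)))
      rw [show j + (l + 1) = j + l + 1 by ring, stk_succ]
      omega
  refine ⟨(B + 1 + n + 2 * p.norm) * n, fun j hj => ?_⟩
  have h1 := key (j / n)
  have h2 := low (j / n * n) (j % n)
  rw [Nat.div_add_mod'] at h2
  have h3 : B + 1 + n + 2 * p.norm ≤ j / n := (Nat.le_div_iff_mul_le hn).2 hj
  have h4 := Nat.mod_lt j hn
  omega

/-- The height of the stack is eventually periodic up to a positive drift. -/
theorem stk_drift {N : ℕ} (W : ℤ → Letter N) (n : ℕ) (hn : 0 < n)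
    (hW : ∀ k, W (k + n) = W k)
    (hT : ∀ B, ∃ J, ∀ j ≥ J, B < (stk W 0 [] j).length) :
    ∃ (J : ℕ) (m : ℤ), 0 < m ∧
      ∀ j ≥ J, ((stk W 0 [] (j + n)).length : ℤ) = (stk W 0 [] j).length + m := by
  obtain ⟨J, hJ⟩ := hT (stk W 0 [] n).length
  have hsh : ∀ j, stk W n [] j = stk W 0 [] j := fun j => by
    simpa using stk_shift W n hW 0 [] j
  have hadd : ∀ j, stk W 0 [] (j + n) = stk W n (stk W 0 [] n) j := fun j => by
    rw [add_comm]; exact stk_add W n [] j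
  set m : ℤ := ((stk W 0 [] (J + n)).length : ℤ) - (stk W 0 [] J).length with hm
  have hper : ∀ l, ((stk W 0 [] (J + l + n)).length : ℤ) = (stk W 0 [] (J + l)).length + m := by
    intro l
    induction l with
    | zero => simp [hm]
    | succ l ih =>
      -- Beyond `J` the runs started at `0` and at `n` share a nonempty top part `u`, so both
      -- move in the same way and the difference of their heights stays constant.
      obtain ⟨u, x, y, h1, h2, h3⟩ := stk_coalesce W n (stk W 0 [] n) (J + l)
      have h4 := hJ (J + l) (by omega)
      rw [← hsh (J + l), h2] at h4
      have hu : u ≠ [] := by rintro rfl; simp at h4; omega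
      obtain ⟨u', h5, h6⟩ := step_append u x y hu (W (n + (J + l : ℕ)))
      have e1 : stk W 0 [] (J + (l + 1) + n) = u' ++ x := by
        rw [hadd, ← add_assoc, stk_succ, h1, h5]
      have e2 : stk W 0 [] (J + (l + 1)) = u' ++ y := by
        rw [← hsh, ← add_assoc, stk_succ, h2, h6]
      rw [hadd, ← hsh (J + l), h1, h2] at ih
      rw [e1, e2]
      simp only [List.length_append, Nat.cast_add] at ih ⊢
      omega
  refine ⟨J, m, ?_, fun j hj => ?_⟩
  · by_contra hm0
    have hdec : ∀ k : ℕ, (stk W 0 [] (J + k * n)).length ≤ (stk W 0 [] J).length := by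
      intro k
      induction k with
      | zero => simp
      | succ k ih =>
        have := hper (k * n)
        rw [show J + (k + 1) * n = J + k * n + n by ring]
        omega
    obtain ⟨J', hJ'⟩ := hT (stk W 0 [] J).length
    have h1 := hJ' (J + J' * n) (by nlinarith)
    have h2 := hdec J'
    omega
  · obtain ⟨l, rfl⟩ := Nat.exists_eq_add_of_le hj
    exact hper l

/-! ### Arcs of a lattice path with drift -/

/-- The arcs of the path `H`: the up-step at `a` is joined to the down-step at `b` by
which the path first returns to the height `H a`. -/
def HArc (H : ℤ → ℤ) (a b : ℤ) : Prop :=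
  a < b ∧ H (b + 1) = H a ∧ ∀ e, a < e → e ≤ b → H a < H e

/-- The up-steps after which the path never returns to its height. -/
def HSing (H : ℤ → ℤ) (a : ℤ) : Prop := ∀ e, a < e → H a < H e

/-- `H` has steps `±1` and gains `m > 0` over each period `n`. -/
structure Drift (n : ℕ) (H : ℤ → ℤ) (m : ℤ) : Prop where
  step : ∀ k, H (k + 1) = H k + 1 ∨ H (k + 1) = H k - 1
  per : ∀ k, H (k + n) = H k + m
  pos : 0 < m

namespace Drift
variable {n : ℕ} {H : ℤ → ℤ} {m : ℤ}

theorem per_mul (D : Drift n H m) (k t : ℤ) : H (k + t * n) = H k + t * m := by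
  induction t using Int.induction_on with
  | zero => simp
  | succ i ih =>
    have := D.per (k + i * n)
    rw [show k + ((i : ℤ) + 1) * n = k + i * n + n by ring, this, ih]; ring
  | pred i ih =>
    have := D.per (k + (-(i : ℤ) - 1) * n)
    rw [show k + (-(i : ℤ) - 1) * n + n = k + (-(i : ℤ)) * n by ring, ih] at this
    linarith

theorem arc_shift (D : Drift n H m) {a b : ℤ} (h : HArc H a b) (t : ℤ) :
    HArc H (a + t * n) (b + t * n) := by
  obtain ⟨h1, h2, h3⟩ := h
  refine ⟨by linarith, ?_, fun e he he' => ?_⟩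
  · rw [show b + t * n + 1 = b + 1 + t * n by ring, D.per_mul, D.per_mul, h2]
  · have := h3 (e - t * n) (by linarith) (by linarith)
    rw [D.per_mul]
    have h4 := D.per_mul (e - t * n) t
    rw [sub_add_cancel] at h4
    linarith

theorem sing_shift (D : Drift n H m) {a : ℤ} (h : HSing H a) (t : ℤ) :
    HSing H (a + t * n) := by
  intro e he
  have := h (e - t * n) (by linarith)
  rw [D.per_mul]
  have h4 := D.per_mul (e - t * n) t
  rw [sub_add_cancel] at h4
  linarith

theorem arc_up (D : Drift n H m) {a b : ℤ} (h : HArc H a b) : H (a + 1) = H a + 1 := by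
  have := h.2.2 (a + 1) (by omega) (by have := h.1; omega)
  have := D.step a
  omega

theorem arc_down (D : Drift n H m) {a b : ℤ} (h : HArc H a b) : H (b + 1) = H b - 1 := by
  have := h.2.2 b h.1 le_rfl
  have := h.2.1
  have := D.step b
  omega

theorem arc_right_unique {a b b' : ℤ} (h : HArc H a b) (h' : HArc H a b') : b = b' := by
  rcases lt_trichotomy b b' with hl | hl | hl
  · have := h'.2.2 (b + 1) (by have := h.1; omega) (by omega)
    have := h.2.1
    omega
  · exact hl
  · have := h.2.2 (b' + 1) (by have := h'.1; omega) (by omega)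
    have := h'.2.1
    omega

theorem arc_left_unique {a a' b : ℤ} (h : HArc H a b) (h' : HArc H a' b) : a = a' := by
  have e1 := h.2.1
  have e2 := h'.2.1
  rcases lt_trichotomy a a' with hl | hl | hl
  · have := h.2.2 a' hl h'.1.le
    omega
  · exact hl
  · have := h'.2.2 a hl h.1.le
    omega

theorem arc_lt (D : Drift n H m) {a b : ℤ} (h : HArc H a b) : b < a + n := by
  by_contra hb
  have h1 := D.per (b + 1 - n)
  have hm := D.pos
  have e := h.2.1
  rw [sub_add_cancel] at h1
  rcases eq_or_lt_of_le (show a ≤ b + 1 - n by omega) with h2 | h2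
  · rw [← h2] at h1; omega
  · rcases Nat.eq_zero_or_pos n with h0 | h0
    · subst h0; simp at h1; omega
    · have := h.2.2 (b + 1 - n) h2 (by omega)
      omega

theorem exists_lt (D : Drift n H m) (hn : 0 < n) (B : ℤ) : ∃ K, ∀ k, K ≤ k → B < H k := by
  -- On each residue class `H` is strictly increasing with slope `m / n`.
  have hne : ((Finset.range n).image (fun r : ℕ => H r)).Nonempty :=
    ⟨H 0, Finset.mem_image.2 ⟨0, by simpa using hn, by simp⟩⟩
  set M := ((Finset.range n).image (fun r : ℕ => H r)).min' hne with hM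
  have hMle : ∀ r : ℤ, 0 ≤ r → r < n → M ≤ H r := by
    intro r h0 h1
    refine Finset.min'_le _ _ (Finset.mem_image.2 ⟨r.toNat, ?_, ?_⟩)
    · simp; omega
    · simp [h0]
  have hn' : (0 : ℤ) < n := by exact_mod_cast hn
  refine ⟨(|B - M| + 1) * n, fun k hk => ?_⟩
  have h1 := D.per_mul (k % n) (k / n)
  rw [mul_comm (k / n), Int.emod_add_mul_ediv] at h1
  have h2 := hMle (k % n) (Int.emod_nonneg _ hn'.ne') (Int.emod_lt_of_pos _ hn')
  have h3 : |B - M| + 1 ≤ k / n := (Int.le_ediv_iff_mul_le hn').2 hk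
  have h4 := le_abs_self (B - M)
  have h5 := abs_nonneg (B - M)
  have hm := D.pos
  nlinarith

theorem exists_gt (D : Drift n H m) (hn : 0 < n) (B : ℤ) : ∃ K, ∀ k, k ≤ K → H k < B := by
  have D' : Drift n (fun k => - H (-k)) m := by
    refine ⟨fun k => ?_, fun k => ?_, D.pos⟩
    · have := D.step (-(k + 1))
      rw [show -(k + 1) + 1 = -k by ring] at this
      omega
    · have := D.per (-(k + n))
      rw [show -(k + n) + (n : ℤ) = -k by ring] at this
      omega
  obtain ⟨K, hK⟩ := D'.exists_lt hn (-B)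
  refine ⟨-K, fun k hk => ?_⟩
  have := hK (-k) (by omega)
  simp at this
  omega

theorem down_arc (D : Drift n H m) (hn : 0 < n) {b : ℤ} (hb : H (b + 1) = H b - 1) :
    ∃ a, HArc H a b := by
  obtain ⟨K, hK⟩ := D.exists_gt hn (H (b + 1))
  obtain ⟨a, ⟨ha1, ha2⟩, ha3⟩ := Int.exists_greatest_of_bdd
    (P := fun a => a ≤ b ∧ H a ≤ H (b + 1)) ⟨b, fun z hz => hz.1⟩
    ⟨min K b, min_le_right _ _, (hK _ (min_le_left _ _)).le⟩
  have hab : a < b := by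
    rcases eq_or_lt_of_le ha1 with h | h
    · subst h; omega
    · exact h
  have hgt : ∀ e, a < e → e ≤ b → H (b + 1) < H e := fun e h1 h2 => by
    by_contra h
    have := ha3 e ⟨h2, by omega⟩
    omega
  have h1 := hgt (a + 1) (by omega) (by omega)
  have h2 := D.step a
  have h3 : H (b + 1) = H a := by omega
  exact ⟨a, hab, h3, fun e h4 h5 => by have := hgt e h4 h5; omega⟩

theorem up_arc (D : Drift n H m) {a : ℤ} (ha : H (a + 1) = H a + 1)
    (hs : ¬ HSing H a) : ∃ b, HArc H a b := by
  simp only [HSing, not_forall, not_lt] at hs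
  obtain ⟨e, he, he'⟩ := hs
  obtain ⟨c, ⟨hc1, hc2⟩, hc3⟩ := Int.exists_least_of_bdd
    (P := fun c => a < c ∧ H c ≤ H a) ⟨a, fun z hz => hz.1.le⟩ ⟨e, he, he'⟩
  have hgt : ∀ e, a < e → e < c → H a < H e := fun e h1 h2 => by
    by_contra h
    have := hc3 e ⟨h1, by omega⟩
    omega
  have hca : a + 1 < c := by
    rcases eq_or_lt_of_le (show a + 1 ≤ c by omega) with h | h
    · subst h; omega
    · exact h
  have h1 := hgt (c - 1) (by omega) (by omega)
  have h2 := D.step (c - 1)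
  rw [sub_add_cancel] at h2
  exact ⟨c - 1, by omega, by rw [sub_add_cancel]; omega, fun e h3 h4 => hgt e h3 (by omega)⟩

theorem tri (D : Drift n H m) (hn : 0 < n) (k : ℤ) :
    HSing H k ∨ (∃ b, HArc H k b) ∨ ∃ a, HArc H a k := by
  rcases D.step k with h | h
  · by_cases hs : HSing H k
    · exact Or.inl hs
    · exact Or.inr (Or.inl (D.up_arc h hs))
  · exact Or.inr (Or.inr (D.down_arc hn h))

theorem nest (D : Drift n H m) (hn : 0 < n) {a b x : ℤ} (h : HArc H a b) (h1 : a < x)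
    (h2 : x < b) : ∃ y, a < y ∧ y < b ∧ (HArc H x y ∨ HArc H y x) := by
  obtain ⟨hab, e1, h3⟩ := h
  have hx := h3 x h1 h2.le
  rcases D.tri hn x with hs | ⟨y, hy⟩ | ⟨y, hy⟩
  · have := hs (b + 1) (by omega)
    omega
  · refine ⟨y, by have := hy.1; omega, ?_, Or.inl hy⟩
    by_contra hyb
    rcases eq_or_lt_of_le (show b ≤ y by omega) with h | h
    · subst h; have := hy.2.1; omega
    · have := hy.2.2 (b + 1) (by omega) (by omega)
      omega
  · refine ⟨y, ?_, by have := hy.1; omega, Or.inr hy⟩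
    by_contra hya
    have h4 := hy.2.1
    have h5 := h3 (x + 1) (by omega) (by omega)
    rcases eq_or_lt_of_le (show y ≤ a by omega) with h | h
    · subst h; omega
    · have := hy.2.2 a h h1.le
      omega

theorem exists_sing (D : Drift n H m) (hn : 0 < n) : ∃ a, HSing H a := by
  obtain ⟨K, hK⟩ := D.exists_lt hn (H 0)
  obtain ⟨a, ha, ha'⟩ := Int.exists_greatest_of_bdd (P := fun a => H a ≤ H 0)
    ⟨K, fun z hz => by
      by_contra h
      have := hK z (by omega)
      omega⟩ ⟨0, le_rfl⟩
  refine ⟨a, fun e he => ?_⟩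
  by_contra h
  have := ha' e (by omega)
  omega

theorem sing_up (D : Drift n H m) {a : ℤ} (h : HSing H a) : H (a + 1) = H a + 1 := by
  have := h (a + 1) (by omega)
  have := D.step a
  omega

/-- If all arcs starting or ending strictly between `a` and `b` stay there, then the path
runs from `a + 1` to `b` on or above one level, which is its height at both ends. -/
theorem closed_level (D : Drift n H m) {a b : ℤ} (hab : a < b)
    (h : ∀ x, a < x → x < b → (∃ y, y < b ∧ HArc H x y) ∨ ∃ y, a < y ∧ HArc H y x) :
    H b = H (a + 1) ∧ ∀ x, a < x → x ≤ b → H (a + 1) ≤ H x := by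
  have h1 : ∀ k : ℕ, ∀ x, x = a + 1 + k → x ≤ b → H (a + 1) ≤ H x := by
    intro k
    induction k using Nat.strong_induction_on with
    | _ k ih =>
      intro x hx hxb
      rcases Nat.eq_zero_or_pos k with rfl | hk
      · simp at hx; rw [hx]
      have hprev := ih (k - 1) (by omega) (x - 1) (by omega) (by omega)
      rcases h (x - 1) (by omega) (by omega) with ⟨y, hy, hA⟩ | ⟨y, hy, hA⟩
      · have := D.arc_up hA
        rw [sub_add_cancel] at this
        omega
      · have h3 := hA.2.1
        have h4 := hA.1
        rw [sub_add_cancel] at h3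
        have := ih (y - a - 1).toNat (by omega) y (by omega) (by omega)
        omega
  have h2 : ∀ k : ℕ, ∀ x, x = b - k → a < x → H b ≤ H x := by
    intro k
    induction k using Nat.strong_induction_on with
    | _ k ih =>
      intro x hx hxb
      rcases Nat.eq_zero_or_pos k with rfl | hk
      · simp at hx; rw [hx]
      have hprev := ih (k - 1) (by omega) (x + 1) (by omega) (by omega)
      rcases h x (by omega) (by omega) with ⟨y, hy, hA⟩ | ⟨y, hy, hA⟩
      · have h3 := hA.2.1
        have h4 := hA.1
        have := ih (b - (y + 1)).toNat (by omega) (y + 1) (by omega) (by omega)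
        omega
      · have := D.arc_down hA
        omega
  have h3 : ∀ x, a < x → x ≤ b → H (a + 1) ≤ H x := fun x hx hxb =>
    h1 (x - a - 1).toNat x (by omega) hxb
  have h4 := h3 b hab le_rfl
  have h5 := h2 (b - (a + 1)).toNat (a + 1) (by omega) (by omega)
  exact ⟨by omega, h3⟩

end Drift

/-! ### Positions modulo the length -/

/-- The residue in `[n]` of an integer position. -/
def pos (n : ℕ) [NeZero n] (k : ℤ) : Fin n :=
  ⟨(k % n).toNat, by
    have hn : (0 : ℤ) < n := by exact_mod_cast Nat.pos_of_neZero n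
    have := Int.emod_nonneg k hn.ne'
    have := Int.emod_lt_of_pos k hn
    omega⟩

section
variable {n : ℕ} [NeZero n]

theorem n_pos' : (0 : ℤ) < n := by exact_mod_cast Nat.pos_of_neZero n

theorem pos_val (k : ℤ) : ((pos n k).val : ℤ) = k % n := by
  have := Int.emod_nonneg k (n_pos' (n := n)).ne'
  simp [pos, this]

theorem pos_coe (i : Fin n) : pos n (i.val : ℤ) = i := by
  apply Fin.ext
  have h := pos_val (n := n) (i.val : ℤ)
  rw [Int.emod_eq_of_lt (by omega) (by have := i.isLt; omega)] at h
  exact_mod_cast h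

theorem pos_eq_iff {k l : ℤ} : pos n k = pos n l ↔ ∃ t, l = k + t * n := by
  rw [Fin.ext_iff, ← Int.natCast_inj, pos_val, pos_val]
  change k ≡ l [ZMOD n] ↔ _
  rw [Int.modEq_iff_dvd]
  constructor
  · rintro ⟨t, ht⟩
    exact ⟨t, by linarith⟩
  · rintro ⟨t, rfl⟩
    exact ⟨t, by ring⟩

theorem pos_add_mul (k t : ℤ) : pos n (k + t * n) = pos n k :=
  (pos_eq_iff.2 ⟨t, rfl⟩).symm

theorem pos_add (k : ℤ) : pos n (k + n) = pos n k := by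
  simpa using pos_add_mul (n := n) k 1

/-- Residues are injective on windows of length `n`. -/
theorem pos_inj {k l : ℤ} (h : pos n k = pos n l) (h1 : k - n < l) (h2 : l < k + n) :
    k = l := by
  obtain ⟨t, rfl⟩ := pos_eq_iff.1 h
  have hn := n_pos' (n := n)
  have h3 : t < 1 := by nlinarith
  have h4 : -1 < t := by nlinarith
  have : t = 0 := by omega
  simp [this]

/-- Every residue has a representative in each window of length `n`. -/
theorem pos_window (c : ℤ) (i : Fin n) : ∃ k, c ≤ k ∧ k < c + n ∧ pos n k = i := by
  have hn := n_pos' (n := n)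
  refine ⟨c + (i.val - c) % n, ?_, ?_, ?_⟩
  · have := Int.emod_nonneg (i.val - c) hn.ne'
    omega
  · have := Int.emod_lt_of_pos (i.val - c) hn
    omega
  · rw [← pos_coe i, pos_eq_iff]
    refine ⟨(i.val - c) / n, ?_⟩
    have := Int.emod_add_mul_ediv (i.val - c) n
    rw [pos_coe]
    linarith

theorem cnext_pos (k : ℤ) : cnext (pos n k) = pos n (k + 1) := by
  apply Fin.ext
  have h : (((cnext (pos n k)).val : ℕ) : ℤ) = ((pos n (k + 1)).val : ℤ) := by
    rw [pos_val]
    simp only [cnext]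
    push_cast
    rw [pos_val]
    simp
  exact_mod_cast h

theorem cprev_pos (k : ℤ) : cprev (pos n k) = pos n (k - 1) := by
  apply Fin.ext
  have h : (((cprev (pos n k)).val : ℕ) : ℤ) = ((pos n (k - 1)).val : ℤ) := by
    rw [pos_val]
    simp only [cprev]
    have hn := Nat.pos_of_neZero n
    push_cast [Nat.cast_sub (show 1 ≤ (pos n k).val + n by omega)]
    rw [pos_val, show k % n + n - 1 = k % n - 1 + n by ring]
    simp
  exact_mod_cast h

/-- The cyclic interval between two positions is the image of the integer interval. -/
theorem inCyc_pos {i j : ℤ} (h1 : i ≤ j) (h2 : j < i + n) (y : Fin n) :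
    InCyc (pos n i) (pos n j) y ↔ ∃ x, i ≤ x ∧ x ≤ j ∧ pos n x = y := by
  have hn := n_pos' (n := n)
  have key : ∀ x, i ≤ x → x < i + n →
      ((((pos n x).val + n - (pos n i).val) % n : ℕ) : ℤ) = x - i := by
    intro x hx hx'
    have hi := (pos n i).isLt
    push_cast [Nat.cast_sub (show (pos n i).val ≤ (pos n x).val + n by omega)]
    rw [pos_val, pos_val, show x % n + n - i % n = x % n - i % n + n by ring, Int.add_emod_right,
      ← Int.sub_emod, Int.emod_eq_of_lt (by omega) (by omega)]
  obtain ⟨x, hx1, hx2, rfl⟩ := pos_window i y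
  unfold InCyc
  rw [← Int.ofNat_le, key x hx1 hx2, key j h1 h2]
  constructor
  · intro h
    exact ⟨x, hx1, by omega, rfl⟩
  · rintro ⟨x', h3, h4, h5⟩
    have := pos_inj h5 (by omega) (by omega)
    omega

/-- Non-crossing is invariant under rotation: four positions in cyclic order inside one
period behave like four increasing ones. -/
theorem cyc_nc {r : Fin n → Fin n → Prop} (hr : NonCrossingRel r)
    (hs : ∀ i j, r i j → r j i) {a b c d : ℤ} (hab : a < b) (hbc : b < c) (hcd : c < d)
    (hda : d < a + n) (h1 : r (pos n a) (pos n c)) (h2 : r (pos n b) (pos n d)) :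
    r (pos n a) (pos n b) ∨ r (pos n b) (pos n c) ∨ r (pos n c) (pos n d) ∨
      r (pos n d) (pos n a) := by
  have hn := n_pos' (n := n)
  -- Translate by a multiple of `n` so that `a` becomes its own residue.
  obtain ⟨t, a', ha0, han, ha⟩ : ∃ t a' : ℤ, 0 ≤ a' ∧ a' < n ∧ a = a' + t * n :=
    ⟨a / n, a % n, Int.emod_nonneg _ hn.ne', Int.emod_lt_of_pos _ hn, by
      rw [mul_comm, Int.emod_add_mul_ediv]⟩
  obtain ⟨b', hb⟩ : ∃ b', b = b' + t * n := ⟨b - t * n, by ring⟩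
  obtain ⟨c', hc⟩ : ∃ c', c = c' + t * n := ⟨c - t * n, by ring⟩
  obtain ⟨d', hd⟩ : ∃ d', d = d' + t * n := ⟨d - t * n, by ring⟩
  have hp := fun k => pos_add_mul (n := n) k t
  generalize t * (n : ℤ) = q at *
  subst ha hb hc hd
  rw [hp, hp] at h1 h2
  rw [hp, hp, hp, hp]
  have lt1 : ∀ x y : ℤ, 0 ≤ x → x < y → y < n → pos n x < pos n y := by
    intro x y h0 h3 h4
    rw [Fin.lt_def, ← Int.ofNat_lt, pos_val, pos_val, Int.emod_eq_of_lt h0 (by omega),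
      Int.emod_eq_of_lt (by omega) h4]
    exact h3
  have sh : ∀ x : ℤ, pos n (x - n) = pos n x := fun x => by
    rw [← pos_add (n := n) (x - n), sub_add_cancel]
  by_cases hd' : d' < n
  · exact Or.inl (hr _ _ _ _ (lt1 _ _ ha0 (by omega) (by omega)) (lt1 _ _ (by omega) (by omega)
      (by omega)) (lt1 _ _ (by omega) (by omega) (by omega)) h1 h2)
  have d1 := lt1 (d' - n) a' (by omega) (by omega) (by omega)
  rw [sh] at d1
  by_cases hc' : c' < n
  · exact Or.inr (Or.inr (Or.inr (hr _ _ _ _ d1 (lt1 a' b' ha0 (by omega) (by omega))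
      (lt1 b' c' (by omega) (by omega) (by omega)) (hs _ _ h2) h1)))
  have c1 := lt1 (c' - n) (d' - n) (by omega) (by omega) (by omega)
  rw [sh, sh] at c1
  by_cases hb' : b' < n
  · exact Or.inr (Or.inr (Or.inl (hr _ _ _ _ c1 d1
      (lt1 a' b' (by omega) (by omega) (by omega)) (hs _ _ h1) (hs _ _ h2))))
  have b1 := lt1 (b' - n) (c' - n) (by omega) (by omega) (by omega)
  rw [sh, sh] at b1
  exact Or.inr (Or.inl (hr _ _ _ _ b1 c1 d1 h2 (hs _ _ h1)))

end

/-! ### Lifting a half-pairing to the integers -/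

section
variable {n : ℕ}

theorem rel_refl (P : Finpartition (Finset.univ : Finset (Fin n))) (i : Fin n) : Rel P i i := by
  obtain ⟨B, hB, hi⟩ := P.exists_mem (Finset.mem_univ i)
  exact ⟨B, hB, hi, hi⟩

theorem rel_symm {P : Finpartition (Finset.univ : Finset (Fin n))} {i j : Fin n}
    (h : Rel P i j) : Rel P j i := by
  obtain ⟨B, hB, hi, hj⟩ := h
  exact ⟨B, hB, hj, hi⟩

theorem sing_iff {P : Finpartition (Finset.univ : Finset (Fin n))} {i : Fin n} :
    IsSingleton P i ↔ ∀ j, Rel P i j → j = i := by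
  constructor
  · rintro ⟨B, hB, hi, hc⟩ j ⟨B', hB', hi', hj'⟩
    rw [P.eq_of_mem_parts hB' hB hi' hi] at hj'
    obtain ⟨x, rfl⟩ := Finset.card_eq_one.1 hc
    simp at hi hj'
    rw [hi, hj']
  · intro h
    obtain ⟨B, hB, hi⟩ := P.exists_mem (Finset.mem_univ i)
    refine ⟨B, hB, hi, Finset.card_eq_one.2 ⟨i, ?_⟩⟩
    ext j
    simp only [Finset.mem_singleton]
    exact ⟨fun hj => h j ⟨B, hB, hi, hj⟩, fun hj => hj ▸ hi⟩

theorem relTilde_symm {P : Finpartition (Finset.univ : Finset (Fin n))} {i j : Fin n}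
    (h : RelTilde P i j) : RelTilde P j i :=
  h.imp rel_symm And.symm

theorem relTilde_sing {P : Finpartition (Finset.univ : Finset (Fin n))} {i j : Fin n}
    (h : RelTilde P i j) (hi : IsSingleton P i) : IsSingleton P j := by
  rcases h with h | h
  · rwa [sing_iff.1 hi j h]
  · exact h.2

theorem pair_symm {π : HalfPairing n} {i j : Fin n} (h : Pairs π i j) : Pairs π j i :=
  ⟨h.1.symm, rel_symm h.2⟩

theorem pair_unique {π : HalfPairing n} {i j k : Fin n} (h : Pairs π i j) (h' : Pairs π i k) :
    j = k := by
  obtain ⟨hij, B, hB, hi, hj⟩ := h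
  obtain ⟨hik, B', hB', hi', hk⟩ := h'
  rw [π.P.eq_of_mem_parts hB' hB hi' hi] at hk
  by_contra hjk
  have : 2 < B.card := Finset.two_lt_card.2 ⟨i, hi, j, hj, k, hk, hij, hik, hjk⟩
  have := π.card_le B hB
  omega

theorem pair_not_sing {π : HalfPairing n} {i j : Fin n} (h : Pairs π i j) :
    ¬ IsSingleton π.P i := fun hs => h.1 (sing_iff.1 hs j h.2).symm

theorem pair_or_sing (π : HalfPairing n) (i : Fin n) : IsSingleton π.P i ∨ ∃ j, Pairs π i j := by
  by_cases h : IsSingleton π.P i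
  · exact Or.inl h
  · rw [sing_iff] at h
    push Not at h
    obtain ⟨j, h1, h2⟩ := h
    exact Or.inr ⟨j, h2.symm, h1⟩

variable [NeZero n]

/-- The integer positions of through strings. -/
def PSing (π : HalfPairing n) (k : ℤ) : Prop := IsSingleton π.P (pos n k)

/-- The integer lifts of the pairs of `π`, drawn on the side without through strings; the
left end is the outward oriented one. -/
def PArc (π : HalfPairing n) (a b : ℤ) : Prop :=
  a < b ∧ b < a + n ∧ Pairs π (pos n a) (pos n b) ∧ ∀ x, a ≤ x → x ≤ b → ¬ PSing π x

/-- The integer positions with outward orientation. -/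
def PUp (π : HalfPairing n) (a : ℤ) : Prop := PSing π a ∨ ∃ b, PArc π a b

theorem psing_window (π : HalfPairing n) (c : ℤ) : ∃ k, c ≤ k ∧ k < c + n ∧ PSing π k := by
  obtain ⟨i, hi⟩ := π.exists_singleton
  obtain ⟨k, h1, h2, rfl⟩ := pos_window c i
  exact ⟨k, h1, h2, hi⟩

theorem psing_shift {π : HalfPairing n} (k t : ℤ) : PSing π (k + t * n) ↔ PSing π k := by
  unfold PSing; rw [pos_add_mul]

theorem parc_shift {π : HalfPairing n} {a b : ℤ} (h : PArc π a b) (t : ℤ) :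
    PArc π (a + t * n) (b + t * n) := by
  obtain ⟨h1, h2, h3, h4⟩ := h
  refine ⟨by linarith, by linarith, by rwa [pos_add_mul, pos_add_mul], fun x hx hx' => ?_⟩
  rw [← sub_add_cancel x (t * n), psing_shift]
  exact h4 _ (by linarith) (by linarith)

theorem pup_shift {π : HalfPairing n} (k t : ℤ) : PUp π (k + t * n) ↔ PUp π k := by
  have key : ∀ k t : ℤ, PUp π k → PUp π (k + t * n) := by
    rintro k t (h | ⟨b, h⟩)
    · exact Or.inl ((psing_shift k t).2 h)
    · exact Or.inr ⟨_, parc_shift h t⟩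
  refine ⟨fun h => ?_, key k t⟩
  have := key _ (-t) h
  rwa [show k + t * n + -t * n = k by ring] at this

theorem ptri (π : HalfPairing n) (k : ℤ) :
    PSing π k ∨ (∃ b, PArc π k b) ∨ ∃ a, PArc π a k := by
  rcases pair_or_sing π (pos n k) with h | ⟨s, hs⟩
  · exact Or.inl h
  right
  obtain ⟨l, hl1, hl2, rfl⟩ := pos_window k s
  have hkl : k < l := by
    rcases eq_or_lt_of_le hl1 with h | h
    · subst h; exact absurd rfl hs.1
    · exact h
  have hl : pos n (l - n) = pos n l := by rw [← pos_add (n := n) (l - n), sub_add_cancel]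
  by_contra hcon
  push Not at hcon
  have h1 := hcon.1 l
  have h2 := hcon.2 (l - n)
  simp only [PArc, not_and, not_forall, not_not] at h1 h2
  obtain ⟨x, hx1, hx2, hx⟩ := h1 hkl hl2 hs
  obtain ⟨y, hy1, hy2, hy⟩ := h2 (by omega) (by omega) (by rw [hl]; exact pair_symm hs)
  have nk : ¬ PSing π k := pair_not_sing hs
  have nl : ¬ PSing π l := pair_not_sing (pair_symm hs)
  have hy' : PSing π (y + n) := by simpa using (psing_shift (π := π) y 1).2 hy
  have e1 : x ≠ k := by rintro rfl; exact nk hx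
  have e2 : x ≠ l := by rintro rfl; exact nl hx
  have e3 : y ≠ k := by rintro rfl; exact nk hy
  have e4 : y ≠ l - n := by rintro rfl; rw [sub_add_cancel] at hy'; exact nl hy'
  rcases cyc_nc π.nc_tilde (fun _ _ => relTilde_symm) (a := k) (b := x) (c := l) (d := y + n)
    (by omega) (by omega) (by omega) (by omega) (Or.inl hs.2) (Or.inr ⟨hx, hy'⟩)
    with h | h | h | h
  · exact nk (relTilde_sing (relTilde_symm h) hx)
  · exact nl (relTilde_sing h hx)
  · exact nl (relTilde_sing (relTilde_symm h) hy')
  · exact nk (relTilde_sing h hy')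

theorem parc_right_unique {π : HalfPairing n} {a b b' : ℤ} (h : PArc π a b)
    (h' : PArc π a b') : b = b' := by
  have := pair_unique h.2.2.1 h'.2.2.1
  obtain ⟨h1, h2, -⟩ := h
  obtain ⟨h3, h4, -⟩ := h'
  exact pos_inj this (by omega) (by omega)

theorem parc_left_unique {π : HalfPairing n} {a a' b : ℤ} (h : PArc π a b)
    (h' : PArc π a' b) : a = a' := by
  have := pair_unique (pair_symm h.2.2.1) (pair_symm h'.2.2.1)
  obtain ⟨h1, h2, -⟩ := h
  obtain ⟨h3, h4, -⟩ := h'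
  exact pos_inj this (by omega) (by omega)

/-- No interval without through strings contains a full period. -/
theorem no_cover {π : HalfPairing n} {a b : ℤ} (h : ∀ x, a ≤ x → x ≤ b → ¬ PSing π x) :
    b < a + n - 1 := by
  by_contra hb
  obtain ⟨k, h1, h2, h3⟩ := psing_window π a
  exact h k h1 (by omega) h3

theorem parc_not_both {π : HalfPairing n} {a b c : ℤ} (h : PArc π a b) (h' : PArc π b c) :
    False := by
  have h5 := pair_unique (pair_symm h.2.2.1) h'.2.2.1
  obtain ⟨h1, h2, -, h6⟩ := h
  obtain ⟨h3, h4, -, h7⟩ := h'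
  have hc : c < a + n - 1 := no_cover (π := π) (fun x hx hx' => by
    rcases le_total x b with h | h
    · exact h6 x hx h
    · exact h7 x h hx')
  have := pos_inj h5 (by omega) (by omega)
  omega

theorem up_not_right {π : HalfPairing n} {a b : ℤ} (h : PArc π a b) : ¬ PUp π b := by
  rintro (hs | ⟨c, hc⟩)
  · exact h.2.2.2 b h.1.le le_rfl hs
  · exact parc_not_both h hc

theorem not_up {π : HalfPairing n} {b : ℤ} (h : ¬ PUp π b) : ∃ a, PArc π a b := by
  rcases ptri π b with hs | ha | ha
  · exact absurd (Or.inl hs) h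
  · exact absurd (Or.inr ha) h
  · exact ha

theorem parc_no_cross {π : HalfPairing n} {a b c d : ℤ} (h : PArc π a c) (h' : PArc π b d)
    (hab : a < b) (hbc : b < c) (hcd : c < d) : False := by
  have hd : d < a + n - 1 := no_cover (π := π) (fun x hx hx' => by
    rcases le_total x c with h1 | h1
    · exact h.2.2.2 x hx h1
    · exact h'.2.2.2 x (by omega) hx')
  have ne : ∀ x y : ℤ, x < y → y < x + n → pos n x ≠ pos n y := fun x y h1 h2 h3 => by
    have := pos_inj h3 (by omega) h2
    omega
  have hac := h.2.2.1
  have hbd := h'.2.2.1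
  have nab := ne a b hab (by omega)
  have nbc := ne b c hbc (by omega)
  have ncd := ne c d hcd (by omega)
  have nda := ne a d (by omega) (by omega)
  rcases cyc_nc π.nc (fun _ _ => rel_symm) hab hbc hcd (by omega) hac.2 hbd.2
    with h1 | h1 | h1 | h1
  · exact nbc (pair_unique hac ⟨nab, h1⟩).symm
  · exact ncd (pair_unique hbd ⟨nbc, h1⟩).symm
  · exact nda (pair_unique (pair_symm hac) ⟨ncd, h1⟩)
  · exact nab (pair_unique (pair_symm hbd) ⟨nda.symm, h1⟩).symm

theorem pnest_right {π : HalfPairing n} {a b k l : ℤ} (h : PArc π a b) (h' : PArc π k l)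
    (h1 : a < k) (h2 : k < b) : l < b := by
  rcases lt_trichotomy l b with h3 | h3 | h3
  · exact h3
  · subst h3
    have := parc_left_unique h h'
    omega
  · exact (parc_no_cross h h' h1 h2 h3).elim

theorem pnest_left {π : HalfPairing n} {a b k l : ℤ} (h : PArc π a b) (h' : PArc π k l)
    (h1 : a < l) (h2 : l < b) : a < k := by
  rcases lt_trichotomy k a with h3 | h3 | h3
  · exact (parc_no_cross h' h h3 h1 h2).elim
  · subst h3
    have := parc_right_unique h h'
    omega
  · exact h3

theorem out_iff {π : HalfPairing n} {a : ℤ} : OutOriented π (pos n a) ↔ PUp π a := by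
  constructor
  · rintro (h | ⟨s, hs, h⟩)
    · exact Or.inl h
    · obtain ⟨l, hl1, hl2, rfl⟩ := pos_window a s
      refine Or.inr ⟨l, ?_, hl2, hs, fun x hx hx' => h _ ?_⟩
      · rcases eq_or_lt_of_le hl1 with h | h
        · subst h; exact absurd rfl hs.1
        · exact h
      · exact (inCyc_pos hl1 hl2 _).2 ⟨x, hx, hx', rfl⟩
  · rintro (h | ⟨b, h1, h2, h3, h4⟩)
    · exact Or.inl h
    · refine Or.inr ⟨_, h3, fun x hx => ?_⟩
      obtain ⟨x, hx1, hx2, rfl⟩ := (inCyc_pos h1.le h2 x).1 hx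
      exact h4 x hx1 hx2

/-- All arcs with an end strictly between `a` and `b` stay strictly between `a` and `b`. -/
def Closed (π : HalfPairing n) (a b : ℤ) : Prop :=
  ∀ x, a < x → x < b → (∃ y, y < b ∧ PArc π x y) ∨ ∃ y, a < y ∧ PArc π y x

theorem closed_le {π : HalfPairing n} {a b : ℤ} (h : Closed π a b) : b ≤ a + n := by
  by_contra hb
  obtain ⟨k, h1, h2, h3⟩ := psing_window π (a + 1)
  rcases h k (by omega) (by omega) with ⟨y, -, hA⟩ | ⟨y, -, hA⟩
  · exact hA.2.2.2 k le_rfl hA.1.le h3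
  · exact hA.2.2.2 k hA.1.le le_rfl h3

theorem covers_of_closed {π : HalfPairing n} {a b : ℤ} (hab : a < b) (ha : PUp π a)
    (hb : PUp π b) (h : Closed π a b) : Covers π (pos n a) (pos n b) := by
  refine ⟨out_iff.2 ha, out_iff.2 hb, ?_⟩
  have hle := closed_le h
  rcases eq_or_lt_of_le (show a + 1 ≤ b by omega) with h1 | h1
  · left; rw [cnext_pos, h1]
  right
  rw [cnext_pos, cprev_pos]
  intro x hx
  obtain ⟨x, hx1, hx2, rfl⟩ := (inCyc_pos (by omega) (by omega) x).1 hx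
  rcases h x (by omega) (by omega) with ⟨y, hy, hA⟩ | ⟨y, hy, hA⟩
  · exact ⟨pos n y, hA.2.2.1.1.symm, (inCyc_pos (by omega) (by omega) _).2
      ⟨y, by have := hA.1; omega, by omega, rfl⟩, hA.2.2.1⟩
  · exact ⟨pos n y, hA.2.2.1.1, (inCyc_pos (by omega) (by omega) _).2
      ⟨y, by omega, by have := hA.1; omega, rfl⟩, pair_symm hA.2.2.1⟩

theorem closed_of_covers {π : HalfPairing n} {a b : ℤ} (hab : a < b) (hle : b ≤ a + n)
    (h : Covers π (pos n a) (pos n b)) : Closed π a b := by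
  obtain ⟨-, -, h⟩ := h
  rcases eq_or_lt_of_le (show a + 1 ≤ b by omega) with h1 | h1
  · intro x hx hx'; omega
  rcases h with h | h
  · rw [cnext_pos] at h
    have := pos_inj h (by omega) (by omega)
    omega
  rw [cnext_pos, cprev_pos] at h
  have h' : ∀ x, a < x → x < b → ∃ y, a < y ∧ y < b ∧ Pairs π (pos n x) (pos n y) := by
    intro x hx hx'
    obtain ⟨y, -, hy, hp⟩ := h (pos n x) ((inCyc_pos (by omega) (by omega) _).2
      ⟨x, by omega, by omega, rfl⟩)
    obtain ⟨y, hy1, hy2, rfl⟩ := (inCyc_pos (by omega) (by omega) _).1 hy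
    exact ⟨y, by omega, by omega, hp⟩
  have ns : ∀ x, a < x → x < b → ¬ PSing π x := fun x hx hx' => by
    obtain ⟨y, -, -, hp⟩ := h' x hx hx'
    exact pair_not_sing hp
  intro x hx hx'
  obtain ⟨y, hy1, hy2, hp⟩ := h' x hx hx'
  rcases ptri π x with hs | ⟨s, hA⟩ | ⟨s, hA⟩
  · exact absurd hs (ns x hx hx')
  · refine Or.inl ⟨s, ?_, hA⟩
    by_contra hsb
    have h2 : s < a + 1 + n - 1 := no_cover (π := π) (fun z hz hz' => by
      rcases le_total z x with h | h
      · exact ns z (by omega) (by omega)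
      · exact hA.2.2.2 z h hz')
    have := pos_inj (pair_unique hA.2.2.1 hp) (by omega) (by omega)
    omega
  · refine Or.inr ⟨s, ?_, hA⟩
    by_contra hsb
    have h2 : b - 1 < s + n - 1 := no_cover (π := π) (fun z hz hz' => by
      rcases le_total z x with h | h
      · exact hA.2.2.2 z hz h
      · exact ns z (by omega) (by omega))
    have := pos_inj (pair_unique (pair_symm hA.2.2.1) hp) (by omega) (by omega)
    omega

theorem closed_of_sing {π : HalfPairing n} {a b : ℤ} (ha : PSing π a) (hb : PSing π b)
    (h : ∀ x, a < x → x < b → ¬ PSing π x) : Closed π a b := by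
  intro x hx hx'
  rcases ptri π x with hs | ⟨s, hA⟩ | ⟨s, hA⟩
  · exact absurd hs (h x hx hx')
  · refine Or.inl ⟨s, ?_, hA⟩
    by_contra hsb
    exact hA.2.2.2 b hx'.le (by omega) hb
  · refine Or.inr ⟨s, ?_, hA⟩
    by_contra hsb
    exact hA.2.2.2 a (by omega) hx.le ha

/-- The orientation determines the arcs. -/
theorem parc_of_up {π π' : HalfPairing n} (h : ∀ k, PUp π k ↔ PUp π' k) {a b : ℤ}
    (hA : PArc π a b) : PArc π' a b := by
  obtain ⟨d, hd⟩ : ∃ d : ℕ, b - a < d := ⟨(b - a + 1).toNat, by omega⟩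
  induction d generalizing a b with
  | zero => have := hA.1; omega
  | succ d ih =>
    have hab := hA.1
    obtain ⟨a', hA'⟩ := not_up ((h b).not.1 (up_not_right hA))
    have ha'b := hA'.1
    rcases lt_trichotomy a' a with hlt | rfl | hlt
    · exfalso
      rcases (h a).1 (Or.inr ⟨b, hA⟩) with hs | ⟨c, hc⟩
      · exact hA'.2.2.2 a hlt.le hab.le hs
      · have hcb := pnest_right hA' hc hlt hab
        obtain ⟨k, hk⟩ := not_up ((h c).not.2 (up_not_right hc))
        have hak := pnest_left hA hk hc.1 hcb
        have := parc_left_unique hc (ih hk (by omega))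
        omega
    · exact hA'
    · exfalso
      rcases (h a').2 (Or.inr ⟨b, hA'⟩) with hs | ⟨c, hc⟩
      · exact hA.2.2.2 a' hlt.le ha'b.le hs
      · have hcb := pnest_right hA hc hlt ha'b
        have := parc_right_unique hA' (ih hc (by omega))
        omega

theorem pairs_of_up {π π' : HalfPairing n} (h : ∀ k, PUp π k ↔ PUp π' k) {i j : Fin n}
    (hp : Pairs π i j) : Pairs π' i j := by
  have hi := pos_coe i
  rw [← hi] at hp ⊢
  rcases ptri π (i.val : ℤ) with hs | ⟨s, hA⟩ | ⟨s, hA⟩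
  · exact absurd hs (pair_not_sing hp)
  · rw [pair_unique hp hA.2.2.1]
    exact (parc_of_up h hA).2.2.1
  · rw [pair_unique hp (pair_symm hA.2.2.1)]
    exact pair_symm (parc_of_up h hA).2.2.1

theorem eq_of_up {π π' : HalfPairing n} (h : ∀ k, PUp π k ↔ PUp π' k) : π = π' := by
  have hrel : ∀ i j, Rel π.P i j ↔ Rel π'.P i j := by
    intro i j
    by_cases hij : i = j
    · subst hij; exact iff_of_true (rel_refl _ _) (rel_refl _ _)
    · exact ⟨fun hr => (pairs_of_up h ⟨hij, hr⟩).2,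
        fun hr => (pairs_of_up (fun k => (h k).symm) ⟨hij, hr⟩).2⟩
  have hsub : ∀ P Q : Finpartition (Finset.univ : Finset (Fin n)),
      (∀ i j, Rel P i j ↔ Rel Q i j) → ∀ B ∈ P.parts, B ∈ Q.parts := by
    intro P Q hPQ B hB
    obtain ⟨i, hi⟩ := P.nonempty_of_mem_parts hB
    obtain ⟨C, hC, hiC⟩ := Q.exists_mem (Finset.mem_univ i)
    have : B = C := by
      ext j
      constructor
      · intro hj
        obtain ⟨D, hD, hiD, hjD⟩ := (hPQ i j).1 ⟨B, hB, hi, hj⟩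
        rwa [Q.eq_of_mem_parts hC hD hiC hiD]
      · intro hj
        obtain ⟨D, hD, hiD, hjD⟩ := (hPQ i j).2 ⟨C, hC, hiC, hj⟩
        rwa [P.eq_of_mem_parts hB hD hi hiD]
    rwa [this]
  have hP : π.P = π'.P := Finpartition.ext (Finset.Subset.antisymm
    (fun B hB => hsub _ _ hrel B hB) (fun B hB => hsub _ _ (fun i j => (hrel i j).symm) B hB))
  cases π
  cases π'
  simp only [HalfPairing.mk.injEq]
  exact hP

end

/-! ### Uniqueness -/

section
variable {n N : ℕ} [NeZero n]

/-- The periodic bi-infinite word with period `w`. -/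
def lift (w : Fin n → Letter N) (k : ℤ) : Letter N := w (pos n k)

theorem lift_add (w : Fin n → Letter N) (k : ℤ) : lift w (k + n) = lift w k := by
  unfold lift; rw [pos_add]

theorem lift_add_mul (w : Fin n → Letter N) (k t : ℤ) : lift w (k + t * n) = lift w k := by
  unfold lift; rw [pos_add_mul]

/-- `L` lists, in decreasing order, the outward oriented positions in `[c, c + k)` whose
partner, if any, is not in `[c, c + k)`, and their letters form the stack obtained by
reading the letters of `lift w` at `c, …, c + k - 1` from the empty stack. -/
def OpenStack (w : Fin n → Letter N) (π : HalfPairing n) (c : ℤ) (k : ℕ) (L : List ℤ) : Prop :=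
  L.Pairwise (· > ·) ∧
  (∀ t, t ∈ L ↔ c ≤ t ∧ t < c + k ∧ PUp π t ∧ ∀ s, PArc π t s → c + k ≤ s) ∧
  stk (lift w) c [] k = L.map (lift w)

theorem openStack_push {w : Fin n → Letter N} {π : HalfPairing n} (hπ : Admissible w π)
    {c : ℤ} {k : ℕ} {L : List ℤ} (h : OpenStack w π c k L) (hu : PUp π (c + k)) :
    OpenStack w π c (k + 1) ((c + k) :: L) := by
  obtain ⟨h1, h2, h3⟩ := h
  refine ⟨?_, ?_, ?_⟩
  · rw [List.pairwise_cons]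
    exact ⟨fun t ht => ((h2 t).1 ht).2.1, h1⟩
  · intro t
    rw [List.mem_cons, h2]
    push_cast
    constructor
    · rintro (rfl | ⟨h4, h5, h6, h7⟩)
      · exact ⟨by omega, by omega, hu, fun s hs => by have := hs.1; omega⟩
      · refine ⟨h4, by omega, h6, fun s hs => ?_⟩
        have := h7 s hs
        rcases eq_or_lt_of_le this with h8 | h8
        · subst h8; exact absurd hu (up_not_right hs)
        · omega
    · rintro ⟨h4, h5, h6, h7⟩
      by_cases ht : t = c + k
      · exact Or.inl ht
      · exact Or.inr ⟨h4, by omega, h6, fun s hs => by have := h7 s hs; omega⟩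
  · rw [stk_succ, h3]
    cases L with
    | nil => simp [step]
    | cons t L =>
      have ht := (h2 t).1 (by simp)
      obtain ⟨h4, h5, h6, h7⟩ := ht
      have hcl : Closed π t (c + k) := by
        intro x hx hx'
        have hxL : x ∉ t :: L := by
          intro hm
          rcases List.mem_cons.1 hm with h | h
          · omega
          · have := (List.pairwise_cons.1 h1).1 x h
            omega
        by_cases hxu : PUp π x
        · left
          have : ∃ s, PArc π x s ∧ s < c + k := by
            by_contra hcon
            push Not at hcon
            exact hxL ((h2 x).2 ⟨by omega, hx', hxu, hcon⟩)
          obtain ⟨s, hs, hs'⟩ := this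
          exact ⟨s, hs', hs⟩
        · right
          obtain ⟨y, hy⟩ := not_up hxu
          refine ⟨y, ?_, hy⟩
          rcases lt_trichotomy y t with h8 | h8 | h8
          · rcases h6 with hs | ⟨s, hs⟩
            · exact absurd hs (hy.2.2.2 t h8.le hx.le)
            · have := h7 s hs
              have := pnest_right hy hs h8 hx
              omega
          · subst h8
            have := h7 x hy
            omega
          · exact h8
      have := hπ.2 _ _ (covers_of_closed h5 h6 hu hcl)
      change lift w t ≠ linv (lift w (c + k)) at this
      simp [step, this]

theorem openStack_pop {w : Fin n → Letter N} {π : HalfPairing n} (hπ : Admissible w π)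
    {c : ℤ} (hc : PSing π c) {k : ℕ} {L : List ℤ} (h : OpenStack w π c k L)
    (hu : ¬ PUp π (c + k)) :
    ∃ a L', L = a :: L' ∧ OpenStack w π c (k + 1) L' := by
  obtain ⟨h1, h2, h3⟩ := h
  obtain ⟨a, ha⟩ := not_up hu
  have haj := ha.1
  have hca : c < a := by
    by_contra hcon
    exact ha.2.2.2 c (by omega) (by omega) hc
  have haL : a ∈ L := (h2 a).2 ⟨hca.le, haj, Or.inr ⟨_, ha⟩, fun s hs =>
    (parc_right_unique ha hs).le⟩
  cases L with
  | nil => simp at haL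
  | cons t L =>
    obtain ⟨h4, h5, h6, h7⟩ := (h2 t).1 (by simp)
    have hp := List.pairwise_cons.1 h1
    have hat : t = a := by
      rcases List.mem_cons.1 haL with h | h
      · exact h.symm
      · have hlt := hp.1 a h
        exfalso
        rcases h6 with hs | ⟨s, hs⟩
        · exact ha.2.2.2 t (by omega) h5.le hs
        · have := h7 s hs
          have := pnest_right ha hs hlt h5
          omega
    subst hat
    refine ⟨t, L, rfl, hp.2, ?_, ?_⟩
    · intro x
      have hx := h2 x
      push_cast
      constructor
      · intro hxL
        obtain ⟨h8, h9, h10, h11⟩ := hx.1 (List.mem_cons_of_mem _ hxL)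
        refine ⟨h8, by omega, h10, fun s hs => ?_⟩
        rcases eq_or_lt_of_le (h11 s hs) with h12 | h12
        · subst h12
          have := parc_left_unique ha hs
          have := hp.1 x hxL
          omega
        · omega
      · rintro ⟨h8, h9, h10, h11⟩
        have hne : x ≠ c + k := by rintro rfl; exact hu h10
        have hxt : x ≠ t := by
          rintro rfl
          have := h11 _ ha
          omega
        exact (List.mem_cons.1 (hx.2 ⟨h8, by omega, h10, fun s hs => by
          have := h11 s hs; omega⟩)).resolve_left hxt
    · have hw : lift w t = linv (lift w (c + k)) := hπ.1.1 _ _ ha.2.2.1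
      rw [stk_succ, h3]
      simp [step, hw]

theorem exists_openStack {w : Fin n → Letter N} {π : HalfPairing n} (hπ : Admissible w π)
    {c : ℤ} (hc : PSing π c) (k : ℕ) : ∃ L, OpenStack w π c k L := by
  induction k with
  | zero =>
    refine ⟨[], List.Pairwise.nil, fun t => ?_, by simp [stk]⟩
    simp
    intros
    omega
  | succ k ih =>
    obtain ⟨L, hL⟩ := ih
    by_cases hu : PUp π (c + k)
    · exact ⟨_, openStack_push hπ hL hu⟩
    · obtain ⟨a, L', -, h⟩ := openStack_pop hπ hc hL hu
      exact ⟨L', h⟩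

/-- Started at a through string of an admissible half-pairing, the stack grows exactly at the
outward oriented positions. -/
theorem stk_up_iff {w : Fin n → Letter N} {π : HalfPairing n} (hπ : Admissible w π)
    {c : ℤ} (hc : PSing π c) (k : ℕ) :
    PUp π (c + k) ↔
      (stk (lift w) c [] (k + 1)).length = (stk (lift w) c [] k).length + 1 := by
  obtain ⟨L, hL⟩ := exists_openStack hπ hc k
  by_cases hu : PUp π (c + k)
  · have := (openStack_push hπ hL hu).2.2
    rw [this, hL.2.2]
    simp [hu]
  · obtain ⟨a, L', rfl, h⟩ := openStack_pop hπ hc hL hu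
    rw [h.2.2, hL.2.2]
    simp [hu]
    omega

/-- Each through string read stays on the stack, so the stack gets arbitrarily high. -/
theorem stk_large {w : Fin n → Letter N} {π : HalfPairing n} (hπ : Admissible w π)
    {c : ℤ} (hc : PSing π c) (B k : ℕ) (hk : B * n ≤ k) :
    B ≤ (stk (lift w) c [] k).length := by
  obtain ⟨L, -, h2, h3⟩ := exists_openStack hπ hc k
  rw [h3, List.length_map]
  have hn := n_pos' (n := n)
  have hsub : (Finset.range B).image (fun i : ℕ => c + i * n) ⊆ L.toFinset := by
    intro x hx
    obtain ⟨i, hi, rfl⟩ := Finset.mem_image.1 hx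
    rw [Finset.mem_range] at hi
    have hs : PSing π (c + i * n) := (psing_shift _ _).2 hc
    rw [List.mem_toFinset, h2]
    refine ⟨by nlinarith, ?_, Or.inl hs, fun s hA => absurd hs (hA.2.2.2 _ le_rfl hA.1.le)⟩
    have : (B : ℤ) * n ≤ k := by exact_mod_cast hk
    have : (i : ℤ) + 1 ≤ B := by exact_mod_cast hi
    nlinarith
  have h4 := Finset.card_le_card hsub
  rw [Finset.card_image_of_injective, Finset.card_range] at h4
  · exact h4.trans (List.toFinset_card_le L)
  · intro i j hij
    have : (i : ℤ) * n = j * n := by simpa using hij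
    exact_mod_cast mul_right_cancel₀ hn.ne' this

/-- Far from the origin, the orientation of an admissible half-pairing is read off from
the stack run started at the origin. -/
theorem up_eventually {w : Fin n → Letter N} {π : HalfPairing n} (hπ : Admissible w π) :
    ∃ J : ℕ, ∀ j ≥ J, PUp π (j : ℤ) ↔
      (stk (lift w) 0 [] (j + 1)).length = (stk (lift w) 0 [] j).length + 1 := by
  obtain ⟨c, hc0, -, hc⟩ := psing_window π 0
  lift c to ℕ using hc0
  set X := stk (lift w) 0 [] c with hX
  refine ⟨c + (X.length + 1) * n, fun j hj => ?_⟩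
  obtain ⟨k, rfl⟩ := Nat.exists_eq_add_of_le (show c ≤ j by omega)
  obtain ⟨u, x, y, h1, h2, h3⟩ := stk_coalesce (lift w) c X k
  have h4 := stk_large hπ hc (X.length + 1) k (by omega)
  have hu : u ≠ [] := by
    rintro rfl
    rw [h2] at h4
    simp at h4
    omega
  obtain ⟨u', h5, h6⟩ := step_append u x y hu (lift w (c + k))
  have h7 := stk_up_iff hπ hc k
  rw [stk_succ, h2, h6] at h7
  rw [add_assoc, stk_add, stk_add, ← hX, stk_succ, h1, h5]
  push_cast
  rw [h7]
  simp only [List.length_append]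
  omega

theorem admissible_unique {w : Fin n → Letter N} {π π' : HalfPairing n} (hπ : Admissible w π)
    (hπ' : Admissible w π') : π = π' := by
  obtain ⟨J, hJ⟩ := up_eventually hπ
  obtain ⟨J', hJ'⟩ := up_eventually hπ'
  refine eq_of_up fun k => ?_
  have hn := n_pos' (n := n)
  have hk : 0 ≤ k + (J + J' + |k| : ℤ) * n - (J + J') := by
    have := neg_abs_le k
    have := abs_nonneg k
    nlinarith
  obtain ⟨j, hj⟩ := Int.eq_ofNat_of_zero_le (show 0 ≤ k + (J + J' + |k| : ℤ) * n by omega)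
  rw [← pup_shift k (J + J' + |k|), ← pup_shift (π := π') k (J + J' + |k|), hj]
  rw [hJ j (by omega), hJ' j (by omega)]

end

/-! ### The half-pairing of a path with drift -/

section
variable {n : ℕ} [NeZero n] {H : ℤ → ℤ} {m : ℤ}

/-- The positions `a` and `b` are the two ends of an arc of `H`. -/
def HMatch (H : ℤ → ℤ) (a b : ℤ) : Prop := HArc H a b ∨ HArc H b a

/-- Two residues are paired when some of their lifts are the two ends of an arc of `H`. -/
def HPair (n : ℕ) [NeZero n] (H : ℤ → ℤ) (i j : Fin n) : Prop :=
  ∃ a b, HMatch H a b ∧ pos n a = i ∧ pos n b = j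

theorem match_unique (D : Drift n H m) {a b c : ℤ} (h : HMatch H a b) (h' : HMatch H a c) :
    b = c := by
  rcases h with h | h <;> rcases h' with h' | h'
  · exact Drift.arc_right_unique h h'
  · have := D.arc_up h; have := D.arc_down h'; omega
  · have := D.arc_up h'; have := D.arc_down h; omega
  · exact Drift.arc_left_unique h h'

theorem match_shift (D : Drift n H m) {a b : ℤ} (h : HMatch H a b) (t : ℤ) :
    HMatch H (a + t * n) (b + t * n) :=
  h.imp (fun h => D.arc_shift h t) (fun h => D.arc_shift h t)

theorem hpair_symm {i j : Fin n} (h : HPair n H i j) : HPair n H j i := by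
  obtain ⟨a, b, h, h1, h2⟩ := h
  exact ⟨b, a, h.symm, h2, h1⟩

theorem hpair_lift (D : Drift n H m) {i j : Fin n} (h : HPair n H i j) {a : ℤ}
    (ha : pos n a = i) : ∃ b, HMatch H a b ∧ pos n b = j := by
  obtain ⟨c, d, h, h1, rfl⟩ := h
  obtain ⟨t, rfl⟩ := pos_eq_iff.1 (h1.trans ha.symm)
  exact ⟨_, match_shift D h t, pos_add_mul _ _⟩

theorem hpair_unique (D : Drift n H m) {i j k : Fin n} (h : HPair n H i j)
    (h' : HPair n H i k) : j = k := by
  obtain ⟨b, h1, rfl⟩ := hpair_lift D h (pos_coe i)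
  obtain ⟨c, h2, rfl⟩ := hpair_lift D h' (pos_coe i)
  rw [match_unique D h1 h2]

theorem hpair_ne (D : Drift n H m) {i j : Fin n} (h : HPair n H i j) : i ≠ j := by
  rintro rfl
  obtain ⟨a, b, h, h1, h2⟩ := h
  have h3 := h1.trans h2.symm
  rcases h with h | h
  · have := D.arc_lt h; have := h.1
    have := pos_inj h3 (by omega) (by omega)
    omega
  · have := D.arc_lt h; have := h.1
    have := pos_inj h3 (by omega) (by omega)
    omega

/-- A pair separates `[n]` into two cyclic intervals; the points of the one under the arc are
paired among themselves. -/
theorem hpair_side (D : Drift n H m) {i j : Fin n} (hij : i < j) (h : HPair n H i j) :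
    (∀ x, i < x → x < j → ∃ y, i < y ∧ y < j ∧ HPair n H x y) ∨
    (∀ x, (x < i ∨ j < x) → ∃ y, (y < i ∨ j < y) ∧ HPair n H x y) := by
  have hn : 0 < n := Nat.pos_of_neZero n
  obtain ⟨b, h1, h2⟩ := hpair_lift D h (pos_coe i)
  have hij' : i.val < j.val := hij
  have hj := j.isLt
  have hb : pos n b = pos n (j.val : ℤ) := by rw [h2, pos_coe]
  rcases h1 with h1 | h1
  · left
    have := D.arc_lt h1
    have := h1.1
    have hbj : b = j.val := pos_inj hb (by omega) (by omega)
    intro x hx hx'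
    have hx1 : i.val < x.val := hx
    have hx2 : x.val < j.val := hx'
    obtain ⟨y, hy1, hy2, hy3⟩ := D.nest hn h1 (x := x.val) (by omega) (by omega)
    refine ⟨pos n y, ?_, ?_, x.val, y, hy3, pos_coe x, rfl⟩
    · rw [Fin.lt_def]; zify; rw [pos_val, Int.emod_eq_of_lt] <;> omega
    · rw [Fin.lt_def]; zify; rw [pos_val, Int.emod_eq_of_lt] <;> omega
  · right
    have := D.arc_lt h1
    have := h1.1
    have hb' : pos n b = pos n ((j.val : ℤ) - n) := by
      rw [hb, pos_eq_iff]; exact ⟨-1, by ring⟩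
    have hbj : b = j.val - n := pos_inj hb' (by omega) (by omega)
    intro x hx
    rw [Fin.lt_def, Fin.lt_def] at hx
    have hxn := x.isLt
    obtain ⟨x', hx1, hx2, hx3⟩ : ∃ x' : ℤ, b < x' ∧ x' < i.val ∧ pos n x' = x := by
      rcases hx with hx | hx
      · exact ⟨x.val, by omega, by omega, pos_coe x⟩
      · refine ⟨x.val - n, by omega, by omega, ?_⟩
        conv_rhs => rw [← pos_coe x]
        rw [pos_eq_iff]; exact ⟨1, by ring⟩
    obtain ⟨y, hy1, hy2, hy3⟩ := D.nest hn h1 hx1 hx2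
    refine ⟨pos n y, ?_, x', y, hy3, hx3, rfl⟩
    rw [Fin.lt_def, Fin.lt_def]; zify; rw [pos_val]
    rcases le_or_gt 0 y with h0 | h0
    · left; rw [Int.emod_eq_of_lt] <;> omega
    · right
      rw [show y % n = (y + n) % n by simp, Int.emod_eq_of_lt] <;> omega

theorem hpair_trans (D : Drift n H m) {i j k : Fin n} (h : i = j ∨ HPair n H i j)
    (hjk : j = k ∨ HPair n H j k) : i = k ∨ HPair n H i k := by
  rcases h with rfl | h
  · exact hjk
  · rcases hjk with rfl | hjk
    · exact Or.inr h
    · exact Or.inl (hpair_unique D (hpair_symm h) hjk)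

/-- The equivalence relation whose classes are the pairs and the unpaired points. -/
def hSetoid (D : Drift n H m) : Setoid (Fin n) where
  r i j := i = j ∨ HPair n H i j
  iseqv := ⟨fun _ => Or.inl rfl, fun h => h.imp Eq.symm hpair_symm, hpair_trans D⟩

theorem hRel_iff (D : Drift n H m) {i j : Fin n} :
    Rel (Finpartition.ofSetoid (hSetoid D)) i j ↔ i = j ∨ HPair n H i j := by
  have h := Finpartition.mem_part_ofSetoid_iff_rel (s := hSetoid D) (a := i) (b := j)
  rw [Finpartition.mem_part_iff_exists] at h
  constructor
  · rintro ⟨B, hB, h1, h2⟩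
    exact h.1 ⟨B, hB, h2, h1⟩
  · intro h'
    obtain ⟨B, hB, h1, h2⟩ := h.2 h'
    exact ⟨B, hB, h2, h1⟩

theorem hSing_iff (D : Drift n H m) {i : Fin n} :
    IsSingleton (Finpartition.ofSetoid (hSetoid D)) i ↔ ∀ j, ¬ HPair n H i j := by
  rw [sing_iff]
  constructor
  · intro h j hj
    exact hpair_ne D hj (h j ((hRel_iff D).2 (Or.inr hj))).symm
  · intro h j hj
    rcases (hRel_iff D).1 hj with h1 | h1
    · exact h1.symm
    · exact absurd h1 (h j)

theorem hcross (D : Drift n H m) {i1 i2 i3 i4 : Fin n} (h12 : i1 < i2) (h23 : i2 < i3)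
    (h34 : i3 < i4) (h : HPair n H i1 i3) :
    (∃ y, i1 < y ∧ y < i3 ∧ HPair n H i2 y) ∨ ∃ y, (y < i1 ∨ i3 < y) ∧ HPair n H i4 y := by
  rcases hpair_side D (h12.trans h23) h with h1 | h1
  · exact Or.inl (h1 i2 h12 h23)
  · exact Or.inr (h1 i4 (Or.inr h34))

theorem hsing_not_pair (D : Drift n H m) {a : ℤ} (h : HSing H a) (j : Fin n) :
    ¬ HPair n H (pos n a) j := by
  intro hj
  obtain ⟨b, h1, -⟩ := hpair_lift D hj rfl
  rcases h1 with h1 | h1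
  · have := h (b + 1) (by have := h1.1; omega)
    have := h1.2.1
    omega
  · have := D.sing_up h; have := D.arc_down h1; omega

/-- The non-crossing half-pairing formed by the arcs of `H` modulo `n`. -/
noncomputable def hPairing (D : Drift n H m) : HalfPairing n where
  P := Finpartition.ofSetoid (hSetoid D)
  card_le := by
    intro B hB
    by_contra hc
    obtain ⟨x, hx, y, hy, z, hz, hxy, hxz, hyz⟩ :=
      Finset.two_lt_card.1 (not_le.1 hc)
    have h1 := (hRel_iff D).1 ⟨B, hB, hx, hy⟩
    have h2 := (hRel_iff D).1 ⟨B, hB, hx, hz⟩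
    exact hyz (hpair_unique D (h1.resolve_left hxy) (h2.resolve_left hxz))
  exists_singleton := by
    obtain ⟨a, ha⟩ := D.exists_sing (Nat.pos_of_neZero n)
    exact ⟨pos n a, (hSing_iff D).2 (hsing_not_pair D ha)⟩
  nc := by
    intro i1 i2 i3 i4 h12 h23 h34 h h'
    have h1 := ((hRel_iff D).1 h).resolve_left (h12.trans h23).ne
    have h2 := ((hRel_iff D).1 h').resolve_left (h23.trans h34).ne
    exfalso
    rcases hcross D h12 h23 h34 h1 with ⟨y, hy, hy', hp⟩ | ⟨y, hy, hp⟩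
    · rw [hpair_unique D hp h2] at hy'
      exact absurd h34 hy'.not_gt
    · rw [hpair_unique D hp (hpair_symm h2)] at hy
      rcases hy with hy | hy
      · exact absurd h12 hy.not_gt
      · exact absurd h23 hy.not_gt
  nc_tilde := by
    intro i1 i2 i3 i4 h12 h23 h34 h h'
    rcases h with h | h <;> rcases h' with h' | h'
    · have h1 := ((hRel_iff D).1 h).resolve_left (h12.trans h23).ne
      have h2 := ((hRel_iff D).1 h').resolve_left (h23.trans h34).ne
      exfalso
      rcases hcross D h12 h23 h34 h1 with ⟨y, hy, hy', hp⟩ | ⟨y, hy, hp⟩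
      · rw [hpair_unique D hp h2] at hy'
        exact absurd h34 hy'.not_gt
      · rw [hpair_unique D hp (hpair_symm h2)] at hy
        rcases hy with hy | hy
        · exact absurd h12 hy.not_gt
        · exact absurd h23 hy.not_gt
    · have h1 := ((hRel_iff D).1 h).resolve_left (h12.trans h23).ne
      rw [hSing_iff, hSing_iff] at h'
      exfalso
      rcases hcross D h12 h23 h34 h1 with ⟨y, -, -, hp⟩ | ⟨y, -, hp⟩
      · exact h'.1 y hp
      · exact h'.2 y hp
    · have h2 := ((hRel_iff D).1 h').resolve_left (h23.trans h34).ne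
      rw [hSing_iff, hSing_iff] at h
      exfalso
      rcases hpair_side D (h23.trans h34) h2 with h1 | h1
      · obtain ⟨y, -, -, hp⟩ := h1 i3 h23 h34
        exact h.2 y hp
      · obtain ⟨y, -, hp⟩ := h1 i1 (Or.inl h12)
        exact h.1 y hp
    · exact Or.inr ⟨h.1, h'.1⟩

theorem hPairing_pairs (D : Drift n H m) {i j : Fin n} :
    Pairs (hPairing D) i j ↔ HPair n H i j :=
  ⟨fun h => ((hRel_iff D).1 h.2).resolve_left h.1,
    fun h => ⟨hpair_ne D h, (hRel_iff D).2 (Or.inr h)⟩⟩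

theorem psing_of_hsing (D : Drift n H m) {a : ℤ} (h : HSing H a) : PSing (hPairing D) a :=
  (hSing_iff D).2 (hsing_not_pair D h)

theorem match_not_psing (D : Drift n H m) {a b : ℤ} (h : HMatch H a b) :
    ¬ PSing (hPairing D) a :=
  fun hs => (hSing_iff D).1 hs _ ⟨a, b, h, rfl, rfl⟩

theorem parc_of_harc (D : Drift n H m) {a b : ℤ} (h : HArc H a b) : PArc (hPairing D) a b := by
  refine ⟨h.1, D.arc_lt h, (hPairing_pairs D).2 ⟨a, b, Or.inl h, rfl, rfl⟩, fun x hx hx' => ?_⟩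
  rcases eq_or_lt_of_le hx with rfl | hx
  · exact match_not_psing D (Or.inl h)
  rcases eq_or_lt_of_le hx' with rfl | hx'
  · exact match_not_psing D (Or.inr h)
  obtain ⟨y, -, -, hy⟩ := D.nest (Nat.pos_of_neZero n) h hx hx'
  exact match_not_psing D hy

theorem hsing_of_psing (D : Drift n H m) {a : ℤ} (h : PSing (hPairing D) a) : HSing H a := by
  rcases D.tri (Nat.pos_of_neZero n) a with h1 | ⟨b, h1⟩ | ⟨b, h1⟩
  · exact h1
  · exact absurd h (match_not_psing D (Or.inl h1))
  · exact absurd h (match_not_psing D (Or.inr h1))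

theorem harc_of_parc (D : Drift n H m) {a b : ℤ} (h : PArc (hPairing D) a b) : HArc H a b := by
  rcases D.tri (Nat.pos_of_neZero n) a with h1 | ⟨c, h1⟩ | ⟨c, h1⟩
  · exact absurd (psing_of_hsing D h1) (h.2.2.2 a le_rfl h.1.le)
  · rwa [parc_right_unique h (parc_of_harc D h1)]
  · exact absurd (Or.inr ⟨b, h⟩) (up_not_right (parc_of_harc D h1))

theorem up_of_pup (D : Drift n H m) {a : ℤ} (h : PUp (hPairing D) a) : H (a + 1) = H a + 1 := by
  rcases h with h | ⟨b, h⟩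
  · exact D.sing_up (hsing_of_psing D h)
  · exact D.arc_up (harc_of_parc D h)

theorem closed_hlevel (D : Drift n H m) {a b : ℤ} (hab : a < b)
    (h : Closed (hPairing D) a b) :
    H b = H (a + 1) ∧ ∀ x, a < x → x ≤ b → H (a + 1) ≤ H x :=
  D.closed_level hab fun x hx hx' => (h x hx hx').imp
    (fun ⟨y, hy, hA⟩ => ⟨y, hy, harc_of_parc D hA⟩)
    (fun ⟨y, hy, hA⟩ => ⟨y, hy, harc_of_parc D hA⟩)

end

/-! ### The height path of a periodic word -/

/-- The lengths of the stacks extend quasi-periodically to a path on all of `ℤ`. -/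
theorem exists_height {N : ℕ} (W : ℤ → Letter N) (n J : ℕ) (hn : 0 < n) (m : ℤ) (hm : 0 < m)
    (h : ∀ j ≥ J, ((stk W 0 [] (j + n)).length : ℤ) = (stk W 0 [] j).length + m) :
    ∃ H, Drift n H m ∧ ∀ j : ℕ, J ≤ j → H j = (stk W 0 [] j).length := by
  -- `f k K` is the height at `k` computed `K` periods later
  set f : ℤ → ℤ → ℤ := fun k K => ((stk W 0 [] (k + K * n).toNat).length : ℤ) - K * m with hf
  have hn' : (0 : ℤ) < n := by exact_mod_cast hn
  have hsucc : ∀ k K, (J : ℤ) ≤ k + K * n → f k (K + 1) = f k K := by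
    intro k K hK
    have h1 := h (k + K * n).toNat (by omega)
    have h2 : (k + (K + 1) * n).toNat = (k + K * n).toNat + n := by
      rw [show k + (K + 1) * n = k + K * n + n by ring]; omega
    simp only [hf]
    rw [h2, h1]; ring
  have hle : ∀ k K K', K ≤ K' → (J : ℤ) ≤ k + K * n → f k K' = f k K := by
    intro k K K' hKK hK
    induction K', hKK using Int.leInduction with
    | base => rfl
    | succ K' hK' ih => rw [hsucc, ih]; nlinarith
  have hind : ∀ k K K', (J : ℤ) ≤ k + K * n → (J : ℤ) ≤ k + K' * n → f k K = f k K' := by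
    intro k K K' h1 h2
    rcases le_total K K' with h3 | h3
    · exact (hle k K K' h3 h1).symm
    · exact hle k K' K h3 h2
  have hbig : ∀ k : ℤ, (J : ℤ) ≤ k + (J + |k|) * n := by
    intro k
    have h1 := neg_abs_le k
    have h2 := abs_nonneg k
    nlinarith
  refine ⟨fun k => f k (J + |k|), ⟨fun k => ?_, fun k => ?_, hm⟩, fun j hj => ?_⟩
  · have h1 := hbig k
    have h2 : (J : ℤ) ≤ k + 1 + (J + |k|) * n := by omega
    rw [hind (k + 1) _ (J + |k|) (hbig _) h2]
    simp only [hf]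
    have h3 : (k + 1 + (J + |k|) * n).toNat = (k + (J + |k|) * n).toNat + 1 := by omega
    rw [h3, stk_succ]
    rcases step_length (stk W 0 [] (k + (J + |k|) * n).toNat)
      (W (0 + ((k + (J + |k|) * n).toNat : ℕ))) with h4 | h4 <;> omega
  · have h1 := hbig k
    have h2 : (J : ℤ) ≤ k + n + (J + |k|) * n := by omega
    rw [hind (k + n) _ (J + |k|) (hbig _) h2, ← hsucc k _ h1]
    simp only [hf]
    rw [show k + n + (J + |k|) * (n : ℤ) = k + (J + |k| + 1) * n by ring]
    ring
  · simp only
    rw [hind (j : ℤ) _ 0 (hbig _) (by simpa using hj)]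
    simp [hf]

theorem stk_level {N : ℕ} (W : ℤ → Letter N) {c d : ℕ} (hcd : c ≤ d)
    (h : ∀ e, c ≤ e → e ≤ d → (stk W 0 [] c).length ≤ (stk W 0 [] e).length)
    (hd : (stk W 0 [] d).length = (stk W 0 [] c).length) : stk W 0 [] d = stk W 0 [] c := by
  obtain ⟨k, rfl⟩ := Nat.exists_eq_add_of_le hcd
  obtain ⟨u, hu⟩ := stk_base W c (stk W 0 [] c) k (fun e he => by
    rw [← stk_add]; exact h _ (by omega) (by omega))
  rw [← stk_add] at hu
  rw [hu] at hd ⊢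
  simpa using hd

section
variable {n N : ℕ} [NeZero n] {H : ℤ → ℤ} {m : ℤ} {w : Fin n → Letter N} {J : ℕ}

/-- `H` is a path with drift which eventually records the stack lengths of the lift of `w`. -/
structure Height (w : Fin n → Letter N) (H : ℤ → ℤ) (m : ℤ) (J : ℕ) : Prop where
  drift : Drift n H m
  eq : ∀ j : ℕ, J ≤ j → H j = (stk (lift w) 0 [] j).length

theorem Height.stk_eq (h : Height w H m J) {c d : ℕ} (hJ : J ≤ c) (hcd : c ≤ d)
    (h1 : ∀ x : ℤ, c ≤ x → x ≤ d → H c ≤ H x) (h2 : H d = H c) :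
    stk (lift w) 0 [] d = stk (lift w) 0 [] c := by
  refine stk_level _ hcd (fun e he he' => ?_) ?_
  · have := h1 e (by omega) (by omega)
    rw [h.eq c hJ, h.eq e (by omega)] at this
    exact_mod_cast this
  · rw [h.eq c hJ, h.eq d (by omega)] at h2
    exact_mod_cast h2

theorem Height.push (h : Height w H m J) {a : ℕ} (hJ : J ≤ a) (hu : H (a + 1) = H a + 1) :
    stk (lift w) 0 [] (a + 1) = lift w a :: stk (lift w) 0 [] a := by
  have h1 := h.eq a hJ
  have h2 := h.eq (a + 1) (by omega)
  push_cast at h2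
  rw [stk_succ, step_push, zero_add]
  rw [← stk_succ]
  omega

theorem Height.pop (h : Height w H m J) {a : ℕ} (hJ : J ≤ a) (hu : H (a + 1) = H a - 1) :
    stk (lift w) 0 [] a = linv (lift w a) :: stk (lift w) 0 [] (a + 1) := by
  have h1 := h.eq a hJ
  have h2 := h.eq (a + 1) (by omega)
  push_cast at h2
  have := step_pop (stk (lift w) 0 [] a) (lift w (0 + (a : ℕ))) (by rw [← stk_succ]; omega)
  rw [← stk_succ, zero_add] at this
  exact this

/-- Every position has lifts beyond any bound. -/
theorem exists_shift (n J : ℕ) [NeZero n] (a : ℤ) : ∃ (t : ℤ) (c : ℕ), a + t * n = c ∧ J ≤ c := by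
  refine ⟨J + |a|, (a + (J + |a|) * n).toNat, ?_⟩
  have h1 := neg_abs_le a
  have h2 := abs_nonneg a
  have hn : (0 : ℤ) < n := n_pos'
  have : (J : ℤ) ≤ a + (J + |a|) * n := by nlinarith
  omega

theorem Height.arc_inv (h : Height w H m J) {a b : ℤ} (hA : HArc H a b) :
    lift w a = linv (lift w b) := by
  obtain ⟨t, c, hc, hJ⟩ := exists_shift n J a
  have hB := h.drift.arc_shift hA t
  rw [← lift_add_mul w a t, ← lift_add_mul w b t]
  rw [hc] at hB ⊢
  obtain ⟨d, hd⟩ : ∃ d : ℕ, b + t * n = d := ⟨(b + t * n).toNat, by have := hB.1; omega⟩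
  rw [hd] at hB ⊢
  have hu := h.drift.arc_up hB
  have hdn := h.drift.arc_down hB
  obtain ⟨h1, h2, h3⟩ := hB
  have e := h.stk_eq (c := c + 1) (d := d) (by omega) (by omega)
    (fun x hx hx' => by push_cast at hx ⊢; have := h3 x (by omega) hx'; omega)
    (by push_cast; omega)
  rw [h.push hJ hu, h.pop (by omega) hdn] at e
  exact (List.cons.inj e).1.symm

/-- Over a closed interval the stack returns to the state reached after its left end. -/
theorem Height.closed_stk (h : Height w H m J) {a b : ℕ} (hJ : J ≤ a) (hab : a < b)
    (hcl : Closed (hPairing h.drift) a b) :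
    stk (lift w) 0 [] b = stk (lift w) 0 [] (a + 1) := by
  obtain ⟨h1, h2⟩ := closed_hlevel h.drift (by omega) hcl
  refine h.stk_eq (by omega) hab (fun x hx hx' => ?_) (by push_cast; exact h1)
  push_cast at hx ⊢
  exact h2 x (by omega) hx'

theorem closed_shift {π : HalfPairing n} {a b : ℤ} (h : Closed π a b) (t : ℤ) :
    Closed π (a + t * n) (b + t * n) := by
  intro x hx hx'
  rcases h (x - t * n) (by omega) (by omega) with ⟨y, hy, hA⟩ | ⟨y, hy, hA⟩
  · refine Or.inl ⟨y + t * n, by omega, ?_⟩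
    simpa using parc_shift hA t
  · refine Or.inr ⟨y + t * n, by omega, ?_⟩
    simpa using parc_shift hA t

/-- The letters strictly between the ends of a closed interval cancel in the free group. -/
theorem Height.closed_one (h : Height w H m J) {a : ℤ} {k : ℕ}
    (hcl : Closed (hPairing h.drift) a (a + 1 + k)) :
    FreeGroup.mk (seg (lift w) (a + 1) k) = 1 := by
  obtain ⟨t, c, hc, hJ⟩ := exists_shift n J a
  have hcl' := closed_shift hcl t
  rw [show a + 1 + (k : ℤ) + t * n = a + t * n + 1 + k by ring, hc] at hcl'
  have e := h.closed_stk (b := c + 1 + k) hJ (by omega) (by push_cast; exact hcl')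
  have e1 := mk_stk (lift w) 0 (c + 1 + k)
  rw [e, mk_stk, seg_add _ _ (c + 1) k, ← FreeGroup.mul_mk] at e1
  have e2 := left_eq_mul.1 e1
  rw [← seg_shift (lift w) (t * n) (fun k => lift_add_mul w k t),
    show a + 1 + t * n = a + t * n + 1 by ring, hc]
  simpa using e2

/-- If `i` covers `j`, then the stack has the letter of `i` on top when `j` is read, and the
letter of `j` is pushed, so it does not cancel. -/
theorem Height.cover_ne (h : Height w H m J) {i j : Fin n} (hc : Covers (hPairing h.drift) i j) :
    w i ≠ linv (w j) := by
  obtain ⟨t, c, hc1, hJ⟩ := exists_shift n J (i.val : ℤ)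
  have hi : pos n (c : ℤ) = i := by rw [← hc1, pos_add_mul, pos_coe]
  obtain ⟨d, hd1, hd2, hj⟩ := pos_window ((c : ℤ) + 1) j
  lift d to ℕ using (by omega)
  rw [← hi, ← hj] at hc
  have hcl := closed_of_covers (by omega) (by omega) hc
  have e := h.closed_stk hJ (by omega) hcl
  have u1 := h.push hJ (up_of_pup h.drift (out_iff.1 hc.1))
  have u2 := h.push (a := d) (by omega) (up_of_pup h.drift (out_iff.1 hc.2.1))
  have hr := stk_reduced (lift w) 0 (d + 1)
  rw [u2, e, u1, ← linReduced_iff] at hr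
  have hr' := (List.isChain_cons_cons.1 hr).1
  unfold NCC.lift at hr'
  rw [hi, hj] at hr'
  exact hr'

end

/-! ### The word of through strings -/

theorem red_nil {N : ℕ} {L : List (Letter N)} (h : FreeGroup.mk L = 1) : FreeGroup.Red L [] := by
  have h1 := FreeGroup.reduce.red (L := L)
  rwa [← FreeGroup.toWord_mk, h, FreeGroup.toWord_one] at h1

theorem cyc_of_red {N : ℕ} {L L' : List (Letter N)} (h : FreeGroup.Red L L') :
    CycReducesTo L L' :=
  Relation.ReflTransGen.mono (fun _ _ h => Or.inl h) _ _ h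

theorem cyc_strip {N : ℕ} (A V : List (Letter N)) :
    CycReducesTo (A ++ V ++ FreeGroup.invRev A) V := by
  induction A with
  | nil =>
    simp only [FreeGroup.invRev, List.nil_append, List.map_nil, List.reverse_nil, List.append_nil]
    exact Relation.ReflTransGen.refl
  | cons a A ih =>
    refine Relation.ReflTransGen.head (Or.inr ⟨a, A ++ V ++ FreeGroup.invRev A, ?_, rfl⟩) ih
    simp [FreeGroup.invRev, linv]

section
variable {n N : ℕ} [NeZero n] {H : ℤ → ℤ} {m : ℤ} {w : Fin n → Letter N} {J : ℕ}

/-- The letters at the through strings in `[0, j)`. -/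
noncomputable def thr (w : Fin n → Letter N) (π : HalfPairing n) (j : ℕ) : List (Letter N) :=
  ((List.range j).filter (fun i : ℕ => decide (PSing π (i : ℤ)))).map (fun i : ℕ => lift w (i : ℤ))

theorem thr_sing (π : HalfPairing n) {j : ℕ} (h : PSing π j) :
    thr w π (j + 1) = thr w π j ++ [lift w j] := by
  simp [thr, List.range_succ, h]

theorem thr_not_sing (π : HalfPairing n) {j : ℕ} (h : ¬ PSing π j) :
    thr w π (j + 1) = thr w π j := by
  simp [thr, List.range_succ, h]

theorem thr_double (π : HalfPairing n) : thr w π (n + n) = thr w π n ++ thr w π n := by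
  unfold thr
  rw [List.range_add, List.filter_append, List.map_append, List.filter_map, List.map_map]
  congr 2
  · funext i
    have := lift_add w (i : ℤ)
    simp only [Function.comp_apply]
    push_cast
    rw [add_comm, this]
  · congr 1
    funext i
    have := psing_shift (π := π) (i : ℤ) 1
    simp only [Function.comp_apply]
    push_cast
    rw [one_mul] at this
    rw [add_comm]
    simp [this]

theorem throughWord_eq (π : HalfPairing n) : throughWord w π = thr w π n := by
  have h : (throughFinset π).sort (· ≤ ·) =
      (List.finRange n).filter (fun i => decide (IsSingleton π.P i)) := by
    have hs : throughFinset π =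
        ((List.finRange n).filter (fun i => decide (IsSingleton π.P i))).toFinset := by
      ext i; simp [throughFinset]
    rw [hs, List.toFinset_sort]
    · exact ((List.pairwise_lt_finRange n).imp le_of_lt).filter _
    · exact (List.nodup_finRange n).filter _
  unfold throughWord thr
  rw [h, ← List.map_coe_finRange_eq_range, List.filter_map, List.map_map]
  congr 1
  · funext i
    simp [lift, pos_coe]
  · congr 1
    funext i
    simp [PSing, pos_coe]

/-- With `c` the first through string and `p` the last one before `j`, the prefix of length `j`
reduces linearly to the letters before `c`, the through letters and the letters after `p`. -/
theorem Height.thr_initial (h : Height w H m J) {c : ℕ} (hc : PSing (hPairing h.drift) c)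
    (hc' : ∀ x : ℕ, x < c → ¬ PSing (hPairing h.drift) x) (k : ℕ) :
    ∃ p q : ℕ, p + 1 + q = c + 1 + k ∧ PSing (hPairing h.drift) p ∧
      (∀ x : ℤ, p < x → x < c + 1 + k → ¬ PSing (hPairing h.drift) x) ∧
      LinReduced (thr w (hPairing h.drift) (c + 1 + k)) ∧
      (thr w (hPairing h.drift) (c + 1 + k)).getLast? = some (lift w p) ∧
      FreeGroup.Red (seg (lift w) 0 (c + 1 + k))
        (seg (lift w) 0 c ++ thr w (hPairing h.drift) (c + 1 + k) ++ seg (lift w) (p + 1) q) := by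
  induction k with
  | zero =>
    have h0 : thr w (hPairing h.drift) c = [] := by
      simp only [thr, List.map_eq_nil_iff, List.filter_eq_nil_iff, List.mem_range]
      intro x hx
      simpa using hc' x hx
    have h1 : thr w (hPairing h.drift) (c + 1) = [lift w c] := by rw [thr_sing _ hc, h0]; rfl
    refine ⟨c, 0, rfl, hc, fun x hx hx' => by omega, ?_, ?_, ?_⟩
    · rw [add_zero, h1, LinReduced]; exact List.isChain_singleton _
    · rw [add_zero, h1]; simp
    · rw [add_zero, h1, seg_succ]; simp [seg, FreeGroup.Red.refl]
  | succ k ih =>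
    obtain ⟨p, q, hpq, hp, hno, hlin, hlast, hred⟩ := ih
    rw [show c + 1 + (k + 1) = c + 1 + k + 1 by ring]
    by_cases hs : PSing (hPairing h.drift) ((c + 1 + k : ℕ) : ℤ)
    · have hcl := closed_of_sing hp hs (fun x hx hx' => hno x hx (by push_cast at hx'; exact hx'))
      have hcov := covers_of_closed (by omega) (Or.inl hp) (Or.inl hs) hcl
      have hne := h.cover_ne hcov
      have hone : FreeGroup.mk (seg (lift w) (p + 1) q) = 1 := by
        refine h.closed_one ?_
        rw [← hpq] at hcl
        push_cast at hcl
        exact hcl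
      refine ⟨c + 1 + k, 0, rfl, hs, fun x hx hx' => by push_cast at hx hx'; omega, ?_, ?_, ?_⟩
      · rw [thr_sing _ hs]
        unfold LinReduced at hlin ⊢
        refine List.isChain_append.2 ⟨hlin, by simp, fun x hx y hy => ?_⟩
        rw [hlast] at hx
        simp only [Option.mem_def, Option.some.injEq, List.head?_cons] at hx hy
        subst hx hy
        intro h1
        apply hne
        change lift w p = linv (lift w _)
        rw [h1, linv_linv]
      · rw [thr_sing _ hs]; simp
      · rw [seg_succ, thr_sing _ hs]
        have h2 := hred.trans (FreeGroup.Red.append_append FreeGroup.Red.refl (red_nil hone))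
        have h3 := FreeGroup.Red.append_append h2
          (FreeGroup.Red.refl (L := [lift w (0 + (c + 1 + k : ℕ))]))
        simpa [seg] using h3
    · refine ⟨p, q + 1, by omega, hp, fun x hx hx' => ?_, ?_, ?_, ?_⟩
      · by_cases hx2 : x = (c + 1 + k : ℕ)
        · rw [hx2]; exact hs
        · push_cast at hx' hx2
          exact hno x hx (by omega)
      · rwa [thr_not_sing _ hs]
      · rwa [thr_not_sing _ hs]
      · rw [seg_succ, seg_succ, thr_not_sing _ hs]
        have h3 := FreeGroup.Red.append_append hred
          (FreeGroup.Red.refl (L := [lift w (0 + (c + 1 + k : ℕ))]))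
        rw [List.append_assoc] at h3
        have e : (0 : ℤ) + (c + 1 + k : ℕ) = p + 1 + q := by rw [← hpq]; push_cast; ring
        rw [e] at h3 ⊢
        exact h3

theorem Height.through (h : Height w H m J) :
    CycReducesTo (seg (lift w) 0 n) (thr w (hPairing h.drift) n) ∧
      CycReduced (thr w (hPairing h.drift) n) := by
  have hex : ∃ c : ℕ, PSing (hPairing h.drift) c := by
    obtain ⟨k, h1, h2, h3⟩ := psing_window (hPairing h.drift) 0
    lift k to ℕ using h1
    exact ⟨k, h3⟩
  obtain ⟨c, hc, hc'⟩ : ∃ c : ℕ, PSing (hPairing h.drift) c ∧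
      ∀ x : ℕ, x < c → ¬ PSing (hPairing h.drift) x :=
    ⟨Nat.find hex, Nat.find_spec hex, fun x hx => Nat.find_min hex hx⟩
  have hcn : c < n := by
    obtain ⟨k, h1, h2, h3⟩ := psing_window (hPairing h.drift) 0
    lift k to ℕ using h1
    by_contra hcon
    exact hc' k (by omega) h3
  constructor
  · obtain ⟨k, hk⟩ := Nat.exists_eq_add_of_le (show c + 1 ≤ n from hcn)
    obtain ⟨p, q, hpq, hp, hno, -, -, hred⟩ := h.thr_initial hc hc' k
    rw [← hk] at hpq hred
    -- the letters after `p` and the letters before `c` of the next period cancel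
    have hcn' : PSing (hPairing h.drift) ((c : ℤ) + n) := by
      have := (psing_shift (π := hPairing h.drift) (c : ℤ) 1).2 hc
      rwa [one_mul] at this
    have hcl := closed_of_sing hp hcn' (fun x hx hx' => by
      by_cases hxn : x < n
      · exact hno x hx (by rw [hk] at hxn; push_cast at hxn; omega)
      · intro hsx
        have h1 := (psing_shift (π := hPairing h.drift) (x - n) 1).1 (by simpa using hsx)
        have h2 : x - n = ((x - n).toNat : ℕ) := by omega
        rw [h2] at h1
        exact hc' _ (by omega) h1)
    have hone : FreeGroup.mk (seg (lift w) (p + 1) (q + c)) = 1 := by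
      refine h.closed_one ?_
      convert hcl using 1
      push_cast; omega
    have e : ((p : ℤ) + 1 + q) = 0 + n := by rw [← hpq]; push_cast; ring
    rw [seg_add, e, seg_shift (lift w) n (lift_add w), ← FreeGroup.mul_mk,
      mul_eq_one_iff_eq_inv] at hone
    have hq : FreeGroup.Red (seg (lift w) (p + 1) q)
        (FreeGroup.invRev (FreeGroup.reduce (seg (lift w) 0 c))) := by
      have h1 := FreeGroup.reduce.red (L := seg (lift w) (p + 1) q)
      rwa [← FreeGroup.toWord_mk, hone, FreeGroup.toWord_inv, FreeGroup.toWord_mk] at h1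
    have h2 := hred.trans (FreeGroup.Red.append_append
      (FreeGroup.Red.append_append FreeGroup.reduce.red FreeGroup.Red.refl) hq)
    exact (cyc_of_red h2).trans (cyc_strip _ _)
  · unfold CycReduced
    rw [← thr_double]
    obtain ⟨k, hk⟩ := Nat.exists_eq_add_of_le (show c + 1 ≤ n + n by omega)
    obtain ⟨p, q, -, -, -, hlin, -⟩ := h.thr_initial hc hc' k
    rwa [hk]

theorem ofFn_eq_seg (w : Fin n → Letter N) : List.ofFn w = seg (lift w) 0 n := by
  rw [List.ofFn_eq_map, seg, ← List.map_coe_finRange_eq_range, List.map_map]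
  congr 1
  funext i
  simp [lift, pos_coe]

theorem Height.admissible (h : Height w H m J) : Admissible w (hPairing h.drift) := by
  refine ⟨⟨fun r s hp => ?_, ?_⟩, fun i j hc => h.cover_ne hc⟩
  · obtain ⟨a, b, hm, rfl, rfl⟩ := (hPairing_pairs h.drift).1 hp
    rcases hm with hA | hA
    · exact h.arc_inv hA
    · have := h.arc_inv hA
      unfold lift at this
      rw [this, linv_linv]
  · rw [throughWord_eq, ofFn_eq_seg]
    exact h.through

theorem exists_admissible (w : Fin n → Letter N) (v : List (Letter N))
    (hv : CycReducesTo (List.ofFn w) v) (hvc : CycReduced v) (hvpos : 0 < v.length) :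
    ∃ π : HalfPairing n, Admissible w π := by
  have hn := Nat.pos_of_neZero n
  rw [ofFn_eq_seg] at hv
  obtain ⟨J, m, hm, hJ⟩ := stk_drift (lift w) n hn (lift_add w)
    (stk_tendsto (lift w) n hn (lift_add w) v hv hvc hvpos)
  obtain ⟨H, hD, hH⟩ := exists_height (lift w) n J hn m hm hJ
  have h : Height w H m J := ⟨hD, hH⟩
  exact ⟨_, h.admissible⟩

end

/-- The empty word has trivial cyclic reduction, which rules out `n = 0`. -/
theorem cyc_nil {N : ℕ} {v : List (Letter N)} (h : CycReducesTo [] v) : v = [] := by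
  induction h with
  | refl => rfl
  | tail _ h ih =>
    subst ih
    rcases h with h | ⟨l, m, h, -⟩
    · exact absurd h FreeGroup.Red.not_step_nil
    · simp at h

/-- Every word of length `n` whose cyclic reduction has positive length has a
unique `w`-admissible non-crossing half-pairing on `[n]`. -/
theorem existsUnique_admissible_halfPairing (N n : ℕ) (w : Fin n → Letter N)
    (v : List (Letter N)) (hv : CycReducesTo (List.ofFn w) v) (hvc : CycReduced v)
    (hvpos : 0 < v.length) :
    ∃! π : HalfPairing n, Admissible w π := by
  have hn : NeZero n := ⟨by
    rintro rfl
    rw [List.ofFn_zero] at hv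
    rw [cyc_nil hv] at hvpos
    simp at hvpos⟩
  obtain ⟨π, hπ⟩ := exists_admissible w v hv hvc hvpos
  exact ⟨π, hπ, fun π' hπ' => admissible_unique hπ' hπ⟩

end NCC
end

section
/- Let n ≥ k ≥ 1 with n - k even. The number of non-crossing half-pairings on [n] with exactly k through strings is the binomial coefficient C(n, (n-k)/2). -/
/-!
Place the points on a circle. Since the merged partition is non-crossing and there is a through
string, all through strings lie on one side of each pair, so exactly one point `x` of each pair is
an *opener*: the clockwise arc from `x` to its partner contains no through string. A half-pairing
with `k` through strings has `m = (n - k) / 2` openers, and the theorem follows because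
sending a half-pairing to its set of openers is a bijection onto the `m`-element subsets of `[n]`.

The bijectivity is `existsUnique_valid`: for point sets `S ⊆ T` with `2 |S| < |T|` there is exactly
one half-pairing on `T` (recorded by its partner involution) with opener set `S`. The proof is by
induction on `|S|`. Some `i ∈ S` is followed, in the cyclic order of `T`, by a point `j ∉ S`
(`exists_adjacent`); in every half-pairing with opener set `S` these two are paired
(`Valid.partner_adjacent`), and deleting or inserting the pair `{i, j}` translates between
half-pairings on `T` and on `T \ {i, j}` (`Valid.delete`, `Valid.insert`). Working with subsets
`T` of a fixed `Fin n` avoids relabelling points.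

The passage between `HalfPairing n` and partner involutions is `valid_openers` and
`exists_halfPairing`.
-/

namespace NCC

open scoped Classical

/-! ### Cyclic matchings with a prescribed opener set -/

/-- `b` lies strictly inside the cyclic arc running from `a` up to `c`. -/
def Cyc {n : ℕ} (a b c : Fin n) : Prop :=
  (a < b ∧ b < c) ∨ (b < c ∧ c < a) ∨ (c < a ∧ a < b)

/-- `f` is the partner involution of a half-pairing on the point set `T`, with set of openers
`S`. Points outside `T` and through strings are fixed by `f`; every pair has exactly one
point in `S`, and the arc from an opener to its partner contains no through string. -/
structure Valid {n : ℕ} (T S : Finset (Fin n)) (f : Fin n → Fin n) : Prop where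
  inv : ∀ x, f (f x) = x
  supp : ∀ x, f x ≠ x → x ∈ T
  nc : ∀ x y, f x ≠ x → f y ≠ y → Cyc x y (f x) → Cyc x (f y) (f x)
  moved : ∀ x ∈ S, f x ≠ x
  opener : ∀ x ∈ S, ∀ a ∈ T, f a = a → ¬ Cyc x a (f x)
  cover : ∀ x, f x ≠ x → x ∈ S ∨ f x ∈ S
  excl : ∀ x ∈ S, f x ∉ S

/-- Some opener is immediately followed, in the cyclic order of `T`, by a non-opener: an arc
from `S` to `T \ S` containing the fewest points of `T` contains none. -/
lemma exists_adjacent {n : ℕ} (T S : Finset (Fin n)) (d : ℕ) :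
    ∀ i ∈ S, ∀ j ∈ T, j ∉ S → (T.filter (fun t => Cyc i t j)).card ≤ d →
      ∃ i ∈ S, ∃ j ∈ T, j ∉ S ∧ ∀ t ∈ T, ¬ Cyc i t j := by
  induction d with
  | zero =>
    intro i hi j hj hjS hd
    refine ⟨i, hi, j, hj, hjS, fun t ht hc => ?_⟩
    have : t ∈ T.filter (fun t => Cyc i t j) := by simp [ht, hc]
    rw [Finset.card_eq_zero.mp (Nat.le_zero.mp hd)] at this
    simp at this
  | succ d ih =>
    intro i hi j hj hjS hd
    by_cases h : ∃ t ∈ T, Cyc i t j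
    · obtain ⟨t, ht, hc⟩ := h
      have htf : t ∈ T.filter (fun t => Cyc i t j) := by simp [ht, hc]
      by_cases htS : t ∈ S
      · refine ih t htS j hj hjS (Nat.le_of_lt_succ (lt_of_lt_of_le (Finset.card_lt_card ?_) hd))
        refine (Finset.ssubset_iff_of_subset ?_).2 ⟨t, htf, ?_⟩
        · intro u hu
          simp only [Finset.mem_filter] at hu ⊢
          refine ⟨hu.1, ?_⟩
          have := hu.2
          unfold Cyc at *
          omega
        · intro h
          have := (Finset.mem_filter.1 h).2
          unfold Cyc at this
          omega
      · refine ih i hi t ht htS (Nat.le_of_lt_succ (lt_of_lt_of_le (Finset.card_lt_card ?_) hd))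
        refine (Finset.ssubset_iff_of_subset ?_).2 ⟨t, htf, ?_⟩
        · intro u hu
          simp only [Finset.mem_filter] at hu ⊢
          refine ⟨hu.1, ?_⟩
          have := hu.2
          unfold Cyc at *
          omega
        · intro h
          have := (Finset.mem_filter.1 h).2
          unfold Cyc at this
          omega
    · push Not at h
      exact ⟨i, hi, j, hj, hjS, h⟩

lemma Valid.inj {n : ℕ} {T S : Finset (Fin n)} {f : Fin n → Fin n} (h : Valid T S f) :
    Function.Injective f := fun x y hxy => by rw [← h.inv x, hxy, h.inv]

lemma Valid.exists_fixed {n : ℕ} {T S : Finset (Fin n)} {f : Fin n → Fin n}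
    (h : Valid T S f) (hc : 2 * S.card < T.card) : ∃ a ∈ T, f a = a := by
  by_contra! hne
  have hsub : T ⊆ S ∪ S.image f := by
    intro x hx
    rcases h.cover x (hne x hx) with h1 | h1
    · simp [h1]
    · exact Finset.mem_union_right _ (Finset.mem_image.2 ⟨f x, h1, h.inv x⟩)
  have h1 := Finset.card_le_card hsub
  have h2 := Finset.card_union_le S (S.image f)
  have h3 := Finset.card_image_le (s := S) (f := f)
  omega

/-- An opener immediately followed by a non-opener must be paired with it: otherwise the
non-opener would be paired, inside the opener's arc, with an opener whose own arc contains
every through string. -/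
lemma Valid.partner_adjacent {n : ℕ} {T S : Finset (Fin n)} {f : Fin n → Fin n}
    (h : Valid T S f) (hc : 2 * S.card < T.card) {i j : Fin n} (hi : i ∈ S) (hj : j ∈ T)
    (hjS : j ∉ S) (hij : ∀ t ∈ T, ¬ Cyc i t j) : f i = j := by
  by_contra hne
  obtain ⟨a, haT, ha⟩ := h.exists_fixed hc
  have hfi := h.moved i hi
  have hcT : f i ∈ T := h.supp _ (by rw [h.inv]; exact hfi.symm)
  have hjne : j ≠ i := fun e => hjS (e ▸ hi)
  have h1 := hij _ hcT
  have h2 : Cyc i j (f i) := by unfold Cyc at *; omega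
  have hfj : f j ≠ j := fun e => h.opener i hi j hj e h2
  have hfjS : f j ∈ S := (h.cover j hfj).resolve_left hjS
  have h3 := h.nc i j hfi hfj h2
  have h4 := hij (f j) (h.supp _ (h.moved _ hfjS))
  have h5 := h.opener i hi a haT ha
  have h6 := h.opener (f j) hfjS a haT ha
  rw [h.inv] at h6
  have h7 : a ≠ i := fun e => hfi (e ▸ ha)
  have h8 : a ≠ j := fun e => hfj (e ▸ ha)
  have h9 : a ≠ f i := fun e => by rw [e, h.inv] at ha; exact hfi ha.symm
  have h10 : a ≠ f j := fun e => by rw [e, h.inv] at ha; exact hfj ha.symm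
  unfold Cyc at *
  omega

/-- Deleting a pair `{i, f i}`, with opener `i`, from a half-pairing. -/
lemma Valid.delete {n : ℕ} {T S : Finset (Fin n)} {f : Fin n → Fin n}
    (h : Valid T S f) {i j : Fin n} (hi : i ∈ S) (hfi : f i = j) :
    Valid ((T.erase i).erase j) (S.erase i) (fun x => if x = i ∨ x = j then x else f x) := by
  have hfj : f j = i := by rw [← hfi, h.inv]
  have hne : j ≠ i := hfi ▸ h.moved i hi
  have hx : ∀ x, f x = i ↔ x = j := fun x => ⟨fun e => h.inj (e.trans hfj.symm), fun e => e ▸ hfj⟩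
  have hx' : ∀ x, f x = j ↔ x = i := fun x => ⟨fun e => h.inj (e.trans hfi.symm), fun e => e ▸ hfi⟩
  have hjS : j ∉ S := hfi ▸ h.excl i hi
  obtain ⟨inv, supp, nc, moved, opener, cover, excl⟩ := h
  constructor
  · intro x; grind
  · intro x; grind
  · intro x y; have := nc x y; grind
  · intro x; grind
  · intro x hxS a; have := opener x; grind
  · intro x; have := cover x; grind
  · intro x; grind

/-- Adding a pair of cyclically adjacent points, with opener `i`, to a half-pairing. -/
lemma Valid.insert {n : ℕ} {T S : Finset (Fin n)} {f : Fin n → Fin n} {i j : Fin n}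
    (h : Valid ((T.erase i).erase j) (S.erase i) f) (hi : i ∈ S) (hST : S ⊆ T) (hj : j ∈ T)
    (hjS : j ∉ S) (hij : ∀ t ∈ T, ¬ Cyc i t j) :
    Valid T S (fun x => if x = i then j else if x = j then i else f x) := by
  have hne : j ≠ i := fun e => hjS (e ▸ hi)
  have hfi : f i = i := by by_contra e; simpa using h.supp i e
  have hfj : f j = j := by by_contra e; simpa using h.supp j e
  have hx : ∀ x, f x = i ↔ x = i := fun x => ⟨fun e => h.inj (e.trans hfi.symm), fun e => e ▸ hfi⟩
  have hx' : ∀ x, f x = j ↔ x = j := fun x => ⟨fun e => h.inj (e.trans hfj.symm), fun e => e ▸ hfj⟩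
  have hT : ∀ x, f x ≠ x → x ∈ T ∧ f x ∈ T ∧ x ≠ i ∧ x ≠ j ∧ f x ≠ i ∧ f x ≠ j := by
    intro x hxx
    have h1 := h.supp x hxx
    have h2 := h.supp (f x) (by rw [h.inv]; exact hxx.symm)
    simp only [Finset.mem_erase] at h1 h2
    tauto
  obtain ⟨inv, supp, nc, moved, opener, cover, excl⟩ := h
  constructor
  · intro x; grind
  · intro x; grind
  · intro x y
    -- The new pair is adjacent, so no old pair separates `i` from `j`.
    have h0 := nc x y
    have h1 := hij x
    have h2 := hij (f x)
    have h3 := hij y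
    have h4 := hij (f y)
    have h5 := hT x
    have h6 := hT y
    by_cases e1 : x = i <;> by_cases e2 : x = j <;> by_cases e3 : y = i <;> by_cases e4 : y = j <;>
      simp only [e1, e2, e3, e4, if_true, if_false] at * <;>
      unfold Cyc at * <;> grind
  · intro x; grind
  · intro x hxS a; have := opener x; grind
  · intro x; have := cover x; grind
  · intro x; grind

/-- A set of fewer than half of the points of `T` is the opener set of exactly one
half-pairing on `T`. -/
lemma existsUnique_valid {n : ℕ} (d : ℕ) : ∀ (T S : Finset (Fin n)), S.card = d → S ⊆ T →
    2 * S.card < T.card → ∃! f, Valid T S f := by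
  induction d with
  | zero =>
    intro T S hd _ _
    obtain rfl := Finset.card_eq_zero.mp hd
    refine ⟨id, ⟨by simp, by simp, by simp, by simp, by simp, by simp, by simp⟩, fun f hf => ?_⟩
    funext x
    by_contra hx
    simpa using hf.cover x hx
  | succ d ih =>
    intro T S hd hST hc
    obtain ⟨i0, hi0⟩ : S.Nonempty := Finset.card_pos.mp (by omega)
    obtain ⟨j0, hj0, hj0S⟩ : ∃ j ∈ T, j ∉ S := Finset.exists_mem_notMem_of_card_lt_card (by omega)
    obtain ⟨i, hi, j, hj, hjS, hij⟩ := exists_adjacent T S _ i0 hi0 j0 hj0 hj0S le_rfl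
    have hne : j ≠ i := fun e => hjS (e ▸ hi)
    have hTc : ((T.erase i).erase j).card = T.card - 1 - 1 := by
      rw [Finset.card_erase_of_mem (by simp [hne, hj]), Finset.card_erase_of_mem (hST hi)]
    have hSc := Finset.card_erase_of_mem hi
    have hsub : S.erase i ⊆ (T.erase i).erase j := by
      intro x hx
      have := @hST x
      grind
    obtain ⟨g, hg, huniq⟩ := ih ((T.erase i).erase j) (S.erase i) (by omega) hsub (by omega)
    refine ⟨_, hg.insert hi hST hj hjS hij, fun f hf => ?_⟩
    have hfi := hf.partner_adjacent hc hi hj hjS hij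
    have hfj : f j = i := by rw [← hfi, hf.inv]
    have := huniq _ (hf.delete hi hfi)
    subst this
    funext x
    grind

lemma Valid.card_fixed {n : ℕ} {S : Finset (Fin n)} {f : Fin n → Fin n}
    (h : Valid Finset.univ S f) :
    (Finset.univ.filter (fun x => f x = x)).card + 2 * S.card = n := by
  have h1 : Finset.univ.filter (fun x => ¬ f x = x) = S ∪ S.image f := by
    ext x
    have hc := h.cover x
    have hm := h.moved
    have hi := h.inv
    simp only [Finset.mem_filter, Finset.mem_univ, true_and, Finset.mem_union, Finset.mem_image]
    grind
  have h2 : Disjoint S (S.image f) := by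
    rw [Finset.disjoint_left]
    intro x hx hx'
    obtain ⟨y, hy, rfl⟩ := Finset.mem_image.1 hx'
    exact h.excl y hy hx
  have h3 := Finset.card_filter_add_card_filter_not (s := (Finset.univ : Finset (Fin n)))
    (fun x => f x = x)
  rw [h1, Finset.card_union_of_disjoint h2, Finset.card_image_of_injective _ h.inj] at h3
  simp at h3
  omega

/-! ### Half-pairings and their partner involutions -/

/-- The other point of the block of `x`, or `x` itself when its block is a singleton. -/
noncomputable def partner {n : ℕ} (P : Finpartition (Finset.univ : Finset (Fin n)))
    (x : Fin n) : Fin n :=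
  if h : ∃ y, y ≠ x ∧ Rel P x y then h.choose else x

section Partner

variable {n : ℕ} {P : Finpartition (Finset.univ : Finset (Fin n))}

lemma Rel.refl' (x : Fin n) : Rel P x x := by
  obtain ⟨B, hB, hx⟩ := P.exists_mem (Finset.mem_univ x)
  exact ⟨B, hB, hx, hx⟩

lemma Rel.symm' {x y : Fin n} (h : Rel P x y) : Rel P y x := by
  obtain ⟨B, hB, hx, hy⟩ := h
  exact ⟨B, hB, hy, hx⟩

lemma Rel.unique (hP : ∀ B ∈ P.parts, B.card ≤ 2) {x y z : Fin n} (hy : y ≠ x) (hz : z ≠ x)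
    (h1 : Rel P x y) (h2 : Rel P x z) : y = z := by
  obtain ⟨B, hB, hx, hyB⟩ := h1
  obtain ⟨C, hC, hx', hzC⟩ := h2
  obtain rfl := P.eq_of_mem_parts hB hC hx hx'
  by_contra hne
  have := Finset.two_lt_card.2 ⟨x, hx, y, hyB, z, hzC, hy.symm, hz.symm, hne⟩
  have := hP B hB
  omega

lemma rel_iff (hP : ∀ B ∈ P.parts, B.card ≤ 2) (x y : Fin n) :
    Rel P x y ↔ y = x ∨ y = partner P x := by
  unfold partner
  split_ifs with h
  · constructor
    · intro hr
      by_cases hy : y = x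
      · exact Or.inl hy
      · exact Or.inr (Rel.unique hP hy h.choose_spec.1 hr h.choose_spec.2)
    · rintro (rfl | rfl)
      · exact Rel.refl' _
      · exact h.choose_spec.2
  · push Not at h
    constructor
    · intro hr
      by_contra hne
      exact h y (by tauto) hr
    · rintro (rfl | rfl) <;> exact Rel.refl' _

lemma isSingleton_iff (hP : ∀ B ∈ P.parts, B.card ≤ 2) (x : Fin n) :
    IsSingleton P x ↔ partner P x = x := by
  constructor
  · rintro ⟨B, hB, hx, hc⟩
    obtain ⟨C, hC, hx', hp⟩ := (rel_iff hP x (partner P x)).2 (Or.inr rfl)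
    obtain rfl := P.eq_of_mem_parts hB hC hx hx'
    obtain ⟨b, rfl⟩ := Finset.card_eq_one.1 hc
    simp at hx hp
    rw [hx, ← hx, hp, hx]
  · intro he
    obtain ⟨B, hB, hx⟩ := P.exists_mem (Finset.mem_univ x)
    refine ⟨B, hB, hx, Finset.card_eq_one.2 ⟨x, ?_⟩⟩
    ext y
    simp only [Finset.mem_singleton]
    constructor
    · intro hy
      have := (rel_iff hP x y).1 ⟨B, hB, hx, hy⟩
      rw [he] at this
      tauto
    · rintro rfl
      exact hx

lemma partner_partner (hP : ∀ B ∈ P.parts, B.card ≤ 2) (x : Fin n) :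
    partner P (partner P x) = x := by
  have h1 := (rel_iff hP x (partner P x)).2 (Or.inr rfl)
  rcases (rel_iff hP _ _).1 h1.symm' with h | h
  · rw [← h, ← h]
  · exact h.symm

/-- A partition is determined by its relation. -/
lemma eq_of_rel {P Q : Finpartition (Finset.univ : Finset (Fin n))}
    (h : ∀ x y, Rel P x y ↔ Rel Q x y) : P = Q := by
  have key : ∀ {P Q : Finpartition (Finset.univ : Finset (Fin n))},
      (∀ x y, Rel P x y ↔ Rel Q x y) → P.parts ⊆ Q.parts := by
    intro P Q h B hB
    obtain ⟨x, hx⟩ := P.nonempty_of_mem_parts hB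
    obtain ⟨C, hC, hxC⟩ := Q.exists_mem (Finset.mem_univ x)
    suffices B = C by rwa [this]
    ext y
    constructor
    · intro hy
      obtain ⟨D, hD, hxD, hyD⟩ := (h x y).1 ⟨B, hB, hx, hy⟩
      rwa [Q.eq_of_mem_parts hC hD hxC hxD]
    · intro hy
      obtain ⟨D, hD, hxD, hyD⟩ := (h x y).2 ⟨C, hC, hxC, hy⟩
      rwa [P.eq_of_mem_parts hB hD hx hxD]
  exact Finpartition.ext (Finset.Subset.antisymm (key h) (key fun x y => (h x y).symm))

end Partner

/-- The cyclic form of the non-crossing condition: two related pairs that separate each other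
on the circle merge, hence some two neighbours among the four points are related. -/
lemma NonCrossingRel.cyc {n : ℕ} {r : Fin n → Fin n → Prop} (h : NonCrossingRel r)
    (hs : ∀ x y, r x y → r y x) {x y u v : Fin n} (hxu : r x u) (hyv : r y v)
    (h1 : Cyc x y u) (h2 : Cyc u v x) : r x y ∨ r y u ∨ r u v ∨ r v x := by
  have hux := hs _ _ hxu
  have hvy := hs _ _ hyv
  have a1 := h x y u v
  have a2 := h y u v x
  have a3 := h u v x y
  have a4 := h v x y u
  unfold Cyc at *
  grind

/-- The points `x` of pairs such that the arc from `x` to its partner has no through string. -/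
noncomputable def openers {n : ℕ} (π : HalfPairing n) : Finset (Fin n) :=
  Finset.univ.filter fun x =>
    partner π.P x ≠ x ∧ ∀ a, partner π.P a = a → ¬ Cyc x a (partner π.P x)

lemma relTilde_iff {n : ℕ} (π : HalfPairing n) (x y : Fin n) :
    RelTilde π.P x y ↔ (y = x ∨ y = partner π.P x) ∨ (partner π.P x = x ∧ partner π.P y = y) := by
  unfold RelTilde
  rw [rel_iff π.card_le, isSingleton_iff π.card_le, isSingleton_iff π.card_le]

lemma valid_openers {n : ℕ} (π : HalfPairing n) :
    Valid Finset.univ (openers π) (partner π.P) := by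
  have inv := partner_partner π.card_le
  have hr := relTilde_iff π
  have hsymm : ∀ x y, RelTilde π.P x y → RelTilde π.P y x := by
    intro x y
    rw [hr, hr]
    have := inv x
    grind
  have hmem : ∀ x, x ∈ openers π ↔
      partner π.P x ≠ x ∧ ∀ a, partner π.P a = a → ¬ Cyc x a (partner π.P x) := by
    simp [openers]
  obtain ⟨z, hz⟩ := π.exists_singleton
  rw [isSingleton_iff π.card_le] at hz
  have hnc : ∀ x y u v, RelTilde π.P x u → RelTilde π.P y v → Cyc x y u → Cyc u v x →
      RelTilde π.P x y ∨ RelTilde π.P y u ∨ RelTilde π.P u v ∨ RelTilde π.P v x :=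
    fun x y u v => π.nc_tilde.cyc hsymm
  simp only [hr] at hnc
  generalize partner π.P = f at *
  have htri : ∀ x a, f x ≠ x → f a = a → Cyc x a (f x) ∨ Cyc (f x) a x := by
    intro x a hx ha
    have h1 : a ≠ x := fun e => hx (e ▸ ha)
    have h2 : a ≠ f x := fun e => by rw [e, inv] at ha; exact hx ha.symm
    unfold Cyc
    omega
  refine ⟨inv, by simp, ?_, fun x hx => ((hmem x).1 hx).1, ?_, ?_, ?_⟩
  · intro x y hx hy h
    by_contra hcon
    have hyx : y ≠ x := by unfold Cyc at h; omega
    have hyf : y ≠ f x := by unfold Cyc at h; omega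
    have hyx' : f y ≠ x := fun e => hyf (by rw [← e, inv])
    have hyf' : f y ≠ f x := fun e => hyx (by rw [← inv y, e, inv])
    have h2 : Cyc (f x) (f y) x := by unfold Cyc at *; omega
    have := hnc x y (f x) (f y) (by simp) (by simp) h h2
    have := inv x
    have := inv y
    grind
  · intro x hx a _ ha
    exact ((hmem x).1 hx).2 a ha
  · -- If through strings lay on both sides of a pair, their merged block would cross it.
    intro x hx
    by_contra! hcon
    rw [hmem, hmem, inv] at hcon
    push Not at hcon
    obtain ⟨a, ha, hxa⟩ := hcon.1 hx
    obtain ⟨b, hb, hxb⟩ := hcon.2 hx.symm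
    have := hnc x a (f x) b (by simp) (by simp [ha, hb]) hxa hxb
    have := inv x
    grind
  · intro x hx hx'
    rw [hmem] at hx hx'
    rw [inv] at hx'
    rcases htri x z hx.1 hz with h | h
    · exact hx.2 z hz h
    · exact hx'.2 z hz h

lemma throughFinset_eq {n : ℕ} (π : HalfPairing n) :
    throughFinset π = Finset.univ.filter fun x => partner π.P x = x := by
  ext x
  simp [throughFinset, isSingleton_iff π.card_le]

/-- Every involution satisfying `Valid` with at least one fixed point is the partner function
of a half-pairing. -/
lemma exists_halfPairing {n : ℕ} {S : Finset (Fin n)} {f : Fin n → Fin n}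
    (h : Valid Finset.univ S f) (hfix : ∃ a, f a = a) :
    ∃ π : HalfPairing n, partner π.P = f := by
  obtain ⟨inv, -, nc, moved, opener, cover, excl⟩ := h
  let s : Setoid (Fin n) :=
    { r := fun x y => y = x ∨ y = f x
      iseqv := ⟨by simp, fun {x y} => by have := inv x; grind,
        fun {x y z} => by have := inv x; grind⟩ }
  let P : Finpartition (Finset.univ : Finset (Fin n)) := Finpartition.ofSetoid s
  have hrel : ∀ x y, Rel P x y ↔ (y = x ∨ y = f x) := by
    intro x y
    have := Finpartition.mem_part_ofSetoid_iff_rel (s := s) (a := x) (b := y)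
    rw [Finpartition.mem_part_iff_exists] at this
    refine Iff.trans ?_ this
    exact ⟨fun ⟨B, hB, h1, h2⟩ => ⟨B, hB, h2, h1⟩, fun ⟨B, hB, h1, h2⟩ => ⟨B, hB, h2, h1⟩⟩
  have hcard : ∀ B ∈ P.parts, B.card ≤ 2 := by
    intro B hB
    obtain ⟨x, hx⟩ := P.nonempty_of_mem_parts hB
    have : B ⊆ {x, f x} := by
      intro y hy
      simpa using (hrel x y).1 ⟨B, hB, hx, hy⟩
    exact (Finset.card_le_card this).trans Finset.card_le_two
  have hpart : partner P = f := by
    funext x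
    have h1 := (hrel x (f x)).2 (Or.inr rfl)
    have h2 := (rel_iff hcard x (partner P x)).2 (Or.inr rfl)
    rw [rel_iff hcard] at h1
    rw [hrel] at h2
    grind
  have hsing : ∀ x, IsSingleton P x ↔ f x = x := by
    intro x
    rw [isSingleton_iff hcard, hpart]
  have hnc : NonCrossingRel (Rel P) := by
    intro i1 i2 i3 i4 h12 h23 h34 h13 h24
    rw [hrel] at *
    have := nc i1 i2
    unfold Cyc at this
    grind
  refine ⟨⟨P, hcard, hfix.imp fun a => (hsing a).2, hnc, ?_⟩, hpart⟩
  intro i1 i2 i3 i4 h12 h23 h34 h13 h24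
  unfold RelTilde at *
  rcases h13 with h13 | h13
  · rcases h24 with h24 | h24
    · exact Or.inl (hnc i1 i2 i3 i4 h12 h23 h34 h13 h24)
    · rw [hrel] at h13
      rw [hsing, hsing] at h24
      have e : i3 = f i1 := h13.resolve_left (by omega)
      have e' : f i3 = i1 := by rw [e, inv]
      rcases cover i1 (by omega) with hS | hS
      · exact absurd (Or.inl ⟨h12, e ▸ h23⟩) (opener i1 hS i2 (by simp) h24.1)
      · rw [← e] at hS
        exact absurd (Or.inr (Or.inr ⟨e' ▸ h12.trans h23, h34⟩)) (opener i3 hS i4 (by simp) h24.2)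
  · rcases h24 with h24 | h24
    · rw [hrel] at h24
      rw [hsing, hsing] at h13
      have e : i4 = f i2 := h24.resolve_left (by omega)
      have e' : f i4 = i2 := by rw [e, inv]
      rcases cover i2 (by omega) with hS | hS
      · exact absurd (Or.inl ⟨h23, e ▸ h34⟩) (opener i2 hS i3 (by simp) h13.2)
      · rw [← e] at hS
        exact absurd (Or.inr (Or.inl ⟨e' ▸ h12, e' ▸ h23.trans h34⟩))
          (opener i4 hS i1 (by simp) h13.1)
    · exact Or.inr ⟨h13.1, h24.1⟩

/-! ### The count -/

/-- The number of non-crossing half-pairings on `[n]` with exactly `k` through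
strings (`n ≥ k ≥ 1`, `n - k` even) is `C(n, (n-k)/2)`. -/
theorem card_halfPairings (n k : ℕ) (hk : 1 ≤ k) (hkn : k ≤ n) (hpar : Even (n - k)) :
    Nat.card {π : HalfPairing n // (throughFinset π).card = k}
      = n.choose ((n - k) / 2) := by
  obtain ⟨m, hm⟩ := hpar
  have hcard : ∀ π : HalfPairing n, (throughFinset π).card + 2 * (openers π).card = n := by
    intro π
    rw [throughFinset_eq]
    exact (valid_openers π).card_fixed
  have hm' : (n - k) / 2 = m := by omega
  have hlt : ∀ S : Finset (Fin n), S.card = m →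
      2 * S.card < (Finset.univ : Finset (Fin n)).card := by
    intro S hS
    simp only [Finset.card_univ, Fintype.card_fin]
    omega
  let F : {π : HalfPairing n // (throughFinset π).card = k} →
      (Finset.powersetCard m (Finset.univ : Finset (Fin n))) := fun π =>
    ⟨openers π.1, by
      have h1 := hcard π.1
      have h2 := π.2
      simp only [Finset.mem_powersetCard, Finset.subset_univ, true_and]
      omega⟩
  have hF : Function.Bijective F := by
    constructor
    · intro π ρ he
      have he' : openers π.1 = openers ρ.1 := congrArg Subtype.val he
      have hS : (openers π.1).card = m := (Finset.mem_powersetCard.1 (F π).2).2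
      have hρ := valid_openers ρ.1
      rw [← he'] at hρ
      have hf := (existsUnique_valid _ _ _ hS (Finset.subset_univ _) (hlt _ hS)).unique
        (valid_openers π.1) hρ
      have hP : π.1.P = ρ.1.P := eq_of_rel fun x y => by
        rw [rel_iff π.1.card_le, rel_iff ρ.1.card_le, hf]
      obtain ⟨⟨P, _, _, _, _⟩, _⟩ := π
      obtain ⟨⟨Q, _, _, _, _⟩, _⟩ := ρ
      simp only at hP
      subst hP
      rfl
    · rintro ⟨S, hS⟩
      have hSm := (Finset.mem_powersetCard.1 hS).2
      obtain ⟨f, hf, -⟩ := existsUnique_valid _ _ _ hSm (Finset.subset_univ S) (hlt _ hSm)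
      obtain ⟨a, -, ha⟩ := hf.exists_fixed (hlt _ hSm)
      obtain ⟨π, hπ⟩ := exists_halfPairing hf ⟨a, ha⟩
      -- `S` consists of openers and meets every pair, while a pair has only one opener.
      have hv := valid_openers π
      rw [hπ] at hv
      have hSo : S ⊆ openers π := by
        intro x hx
        simp only [openers, hπ, Finset.mem_filter, Finset.mem_univ, true_and]
        exact ⟨hf.moved x hx, fun a ha => hf.opener x hx a (Finset.mem_univ a) ha⟩
      have hoS : openers π ⊆ S := by
        intro x hx
        exact (hf.cover x (hv.moved x hx)).resolve_right fun h => hv.excl x hx (hSo h)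
      have hoe : openers π = S := Finset.Subset.antisymm hoS hSo
      refine ⟨⟨π, ?_⟩, Subtype.ext hoe⟩
      have := hcard π
      rw [hoe] at this
      omega
  rw [Nat.card_eq_of_bijective F hF, hm', Nat.card_eq_fintype_card, Fintype.card_coe,
    Finset.card_powersetCard, Finset.card_univ, Fintype.card_fin]

end NCC
end

section
/- Cycle Lemma (Dvoretsky–Motzkin): Let ε_1, ..., ε_n be a string of +1's and -1's and let k = ε_1 + ⋯ + ε_n. If k > 0, then exactly k of the n cyclic permutations of the string ε_1, ..., ε_n are dominating. -/
/-!
Extend the string periodically to all of `ℕ` and let `S m` be the sum of its first `m` entries, so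
that `S (m + n) = S m + k`. Since `k > 0`, the rotation starting at `i` is dominating exactly when
`S i < S m` for every `m > i` (`dominating_rotate_iff`), and every tail of `S` has a minimum; let
`M i` be the minimum of `S` over `[i, ∞)`. As the steps are `±1`, `M (i + 1) - M i` is `1` if the
rotation at `i` is dominating and `0` otherwise (`tail_min_succ`). Summing over `i < n`, the number
of dominating rotations is `M n - M 0`, which equals `k` by the periodicity of `S`.
-/

namespace CycleLemma

/-- A string of `±1`'s is dominating if every nonempty initial partial sum is
strictly positive. -/
def Dominating (l : List ℤ) : Prop :=
  ∀ p, p <+: l → p ≠ [] → 0 < p.sum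

/-- The sum of the first `m` entries of the periodic extension of `ε`. The default value `0` is
only ever used for the empty list. -/
def psum (ε : List ℤ) (m : ℕ) : ℤ :=
  ∑ j ∈ Finset.range m, ε.getD (j % ε.length) 0

lemma psum_succ (ε : List ℤ) (m : ℕ) :
    psum ε (m + 1) = psum ε m + ε.getD (m % ε.length) 0 :=
  Finset.sum_range_succ _ _

lemma sum_take_rotate (ε : List ℤ) (i j : ℕ) (hj : j ≤ ε.length) :
    ((ε.rotate i).take j).sum = psum ε (i + j) - psum ε i := by
  induction j with
  | zero => simp
  | succ j ih =>
    have hlt : j < (ε.rotate i).length := by simpa using hj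
    have hmod : (j + i) % ε.length < ε.length := Nat.mod_lt _ (by omega)
    rw [List.sum_take_succ _ _ hlt, ih (by omega), ← add_assoc, psum_succ, List.getElem_rotate,
      add_comm i j, List.getD_eq_getElem _ _ hmod]
    ring

lemma psum_add_length (ε : List ℤ) (m : ℕ) :
    psum ε (m + ε.length) = psum ε m + ε.sum := by
  have h := sum_take_rotate ε m ε.length le_rfl
  rw [List.take_of_length_le (by simp), (List.rotate_perm ε m).sum_eq] at h
  linarith

lemma step_eq {ε : List ℤ} (hε : ∀ x ∈ ε, x = 1 ∨ x = -1) (hpos : 0 < ε.length) (m : ℕ) :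
    psum ε (m + 1) = psum ε m + 1 ∨ psum ε (m + 1) = psum ε m - 1 := by
  have hmod : m % ε.length < ε.length := Nat.mod_lt _ hpos
  rw [psum_succ, List.getD_eq_getElem _ _ hmod]
  rcases hε _ (List.getElem_mem hmod) with h | h <;> rw [h]
  · exact Or.inl rfl
  · exact Or.inr rfl

lemma dominating_rotate_iff {ε : List ℤ} (hsum : 0 < ε.sum) (i : ℕ) :
    Dominating (ε.rotate i) ↔ ∀ m, i < m → psum ε i < psum ε m := by
  have hpos : 0 < ε.length := by
    rcases ε with _ | ⟨a, l⟩ <;> simp at hsum ⊢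
  constructor
  · intro h m
    induction m using Nat.strong_induction_on with
    | _ m ih =>
      intro hm
      by_cases hle : m ≤ i + ε.length
      · have h1 := h ((ε.rotate i).take (m - i)) (List.take_prefix _ _) (by
          intro h0
          have := congrArg List.length h0
          rw [List.length_take, List.length_rotate, List.length_nil] at this
          omega)
        rw [sum_take_rotate ε i (m - i) (by omega), Nat.add_sub_cancel' hm.le] at h1
        linarith
      · -- one full period earlier the partial sum is smaller by `ε.sum > 0`
        have h1 := ih (m - ε.length) (by omega) (by omega)
        have h2 := psum_add_length ε (m - ε.length)
        rw [Nat.sub_add_cancel (by omega)] at h2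
        linarith
  · intro h p hp hne
    have hlen : p.length ≤ ε.length := by simpa using hp.length_le
    have hp0 : 0 < p.length := List.length_pos_iff.mpr hne
    rw [List.prefix_iff_eq_take.mp hp, sum_take_rotate ε i _ hlen]
    have := h (i + p.length) (by omega)
    linarith

lemma psum_lower_bound {ε : List ℤ} (hε : ∀ x ∈ ε, x = 1 ∨ x = -1) (hpos : 0 < ε.length)
    (hsum : 0 < ε.sum) (m : ℕ) : -(ε.length : ℤ) ≤ psum ε m := by
  have small : ∀ m : ℕ, -(m : ℤ) ≤ psum ε m := by
    intro m
    induction m with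
    | zero => simp [psum]
    | succ m ih => rcases step_eq hε hpos m with h | h <;> rw [h] <;> push_cast <;> linarith
  induction m using Nat.strong_induction_on with
  | _ m ih =>
    by_cases hm : m < ε.length
    · have := small m
      omega
    · have h1 := ih (m - ε.length) (by omega)
      have h2 := psum_add_length ε (m - ε.length)
      rw [Nat.sub_add_cancel (by omega)] at h2
      linarith

lemma exists_tail_min {ε : List ℤ} (hε : ∀ x ∈ ε, x = 1 ∨ x = -1) (hpos : 0 < ε.length)
    (hsum : 0 < ε.sum) (i : ℕ) : ∃ a, IsLeast (psum ε '' Set.Ici i) a := by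
  obtain ⟨a, ha, hmin⟩ := Int.exists_least_of_bdd (P := fun a => a ∈ psum ε '' Set.Ici i)
    ⟨-(ε.length : ℤ), by
      rintro _ ⟨m, -, rfl⟩
      exact psum_lower_bound hε hpos hsum m⟩
    ⟨_, i, Set.self_mem_Ici, rfl⟩
  exact ⟨a, ha, hmin⟩

open scoped Classical in
lemma tail_min_succ {ε : List ℤ} (hε : ∀ x ∈ ε, x = 1 ∨ x = -1) (hpos : 0 < ε.length)
    (i : ℕ) {a b : ℤ} (ha : IsLeast (psum ε '' Set.Ici i) a)
    (hb : IsLeast (psum ε '' Set.Ici (i + 1)) b) :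
    b - a = if ∀ m, i < m → psum ε i < psum ε m then 1 else 0 := by
  split_ifs with h
  · -- the two minima are attained at `i` and at `i + 1`
    have ha' : a = psum ε i := ha.unique ⟨⟨i, Set.self_mem_Ici, rfl⟩, by
      rintro _ ⟨m, hm, rfl⟩
      rcases eq_or_lt_of_le (Set.mem_Ici.mp hm) with rfl | hlt
      · exact le_rfl
      · exact (h m hlt).le⟩
    have hstep : psum ε (i + 1) = psum ε i + 1 := by
      have := h (i + 1) (by omega)
      rcases step_eq hε hpos i with h1 | h1 <;> omega
    have hb' : b = psum ε i + 1 := hb.unique ⟨⟨i + 1, Set.self_mem_Ici, hstep⟩, by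
      rintro _ ⟨m, hm, rfl⟩
      exact h m hm⟩
    omega
  · -- a later value is at most `psum ε i`, so dropping the index `i` keeps the minimum
    push Not at h
    obtain ⟨m, him, hm⟩ := h
    have hab : a ≤ b := by
      obtain ⟨j, hj, rfl⟩ := hb.1
      exact ha.2 ⟨j, (Nat.le_succ i).trans hj, rfl⟩
    have hba : b ≤ a := by
      obtain ⟨j, hj, rfl⟩ := ha.1
      rcases eq_or_lt_of_le (Set.mem_Ici.mp hj) with rfl | hlt
      · exact (hb.2 ⟨m, him, rfl⟩).trans hm
      · exact hb.2 ⟨j, hlt, rfl⟩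
    omega

open scoped Classical in
/-- **The Cycle Lemma** of Dvoretsky and Motzkin: if `ε_1, …, ε_n` is a string
of `±1`'s with sum `k > 0`, then exactly `k` of its `n` cyclic permutations are
dominating. -/
theorem cycle_lemma (ε : List ℤ) (hε : ∀ x ∈ ε, x = 1 ∨ x = -1)
    (k : ℤ) (hk : k = ε.sum) (hkpos : 0 < k) :
    (((Finset.range ε.length).filter (fun i => Dominating (ε.rotate i))).card : ℤ) = k := by
  subst hk
  have hpos : 0 < ε.length := by
    rcases ε with _ | ⟨a, l⟩ <;> simp at hkpos ⊢
  choose M hM using exists_tail_min hε hpos hkpos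
  have hshift : M ε.length = M 0 + ε.sum := by
    refine (hM ε.length).unique ⟨?_, ?_⟩
    · obtain ⟨m, -, hm⟩ := (hM 0).1
      exact ⟨m + ε.length, Nat.le_add_left _ _, by rw [psum_add_length, hm]⟩
    · rintro _ ⟨m, hm, rfl⟩
      have h1 := (hM 0).2 ⟨m - ε.length, Nat.zero_le _, rfl⟩
      have h2 := psum_add_length ε (m - ε.length)
      rw [Nat.sub_add_cancel hm] at h2
      linarith
  calc (((Finset.range ε.length).filter (fun i => Dominating (ε.rotate i))).card : ℤ)
      = ∑ i ∈ Finset.range ε.length, (M (i + 1) - M i) := by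
        rw [Finset.card_filter]
        push_cast
        refine Finset.sum_congr rfl fun i _ => ?_
        rw [tail_min_succ hε hpos i (hM i) (hM (i + 1))]
        simp only [dominating_rotate_iff hkpos]
    _ = ε.sum := by
        rw [Finset.sum_range_sub, hshift]
        ring

end CycleLemma
end
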